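/- arXiv:1611.08564 — 4 statements merged into one kernel-verified Lean document; each statement's English description precedes it below -/
import Mathlib

section
/- Let μ ∈ ℂ∖{0} and a ∈ ℂ∖{0}. Then the operators μD and T_a possess a common hypercyclic subspace: there exists a closed infinite-dimensional linear subspace M of H(ℂ) such that every nonzero f ∈ M is hypercyclic both for μD and for T_a. -/
/-!
The subspace consists of the functions `f = ∑ cᵢ eᵢ`, where the generators `eᵢ` are constructed
simultaneously. Write `w = z e^{-z/a}`, so that `wⁿ` has a zero of order `n` at `0`. Both operators
treat the powers of `w` mildly: if `L` is the `m`-th iterate of `μD` or of `T_a` and `m` is large,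
then on the disc of radius `j` one has `|L (wⁿ)| ≤ Kⱼⁿ` for all `n ≥ n₀(m)`, with `Kⱼ` independent
of `m`. For `μD` this is Cauchy's estimate, the factor `m! |μ|ᵐ` being absorbed by `2ⁿ`; for `T_a`
it holds because `w(z + m a)` is of size `m e^{-m}`. Both operators also allow corrections: given
polynomials `p` and `g`, for large `m` there is a polynomial `q` of arbitrarily high order at `0`,
small on a prescribed disc, such that `L (p + q)` is close to `g`. For `μD` one takes iterated
antiderivatives (`deriv_corr`); for `T_a` one interpolates between `0` near the origin and
`g(z - m a) - p(z)` near `m a` (`transl_corr`). These properties are collected in `GoodOp`.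

The induction (`exists_step`) runs over tasks `t = 0, 1, 2, …`. At time `t` the `t`-th generator
starts as a truncation of the Taylor series of `w^{N t}`, where `N t` exceeds all degrees used so
far. The generators of index `≤ t` then receive small corrections of order `> N t` such that an
iterate `L` of the operator of the current task maps them near prescribed targets. The next degree
`N (t + 1)` and the next tolerance `δ (t + 1)` are chosen so that `L` is harmless on everything
added later. Every pair of an operator and a target system occurs as a task infinitely often
(`exists_schedule`).

By construction the Taylor coefficient of degree `N i` of `∑ cₖ eₖ` is `cᵢ`. The subspace
`Sys.M` is defined by the resulting linear relations between Taylor coefficients. It is therefore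
closed (`Sys.M_closed`), and it is infinite-dimensional because it contains the `eᵢ`
(`Sys.M_infinite`).

Let `0 ≠ f ∈ M`, with coordinates `cᵢ`, and let `L` be the iterate chosen at time `t`. As `f` is
entire, `|cᵢ|` decays faster than `Kⱼ^{-N i}`. Hence the blocks of `f` of degree `≥ N (t + 1)`,
which are essentially `cₛ w^{N s}` for `s > t`, contribute little to `L f`, and `L f` is close to
`∑_{i ≤ t} cᵢ gᵢ` with `gᵢ` the targets (`Sys.main_estimate`). Choosing `k` with `c_k ≠ 0` and the
targets `g_k ≈ g / c_k`, `gᵢ = 0` for `i ≠ k`, gives `L f ≈ g` (`exists_common`).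
-/

open Filter Metric Set

noncomputable def pnorm (j : ℝ) (f : ℂ → ℂ) : ℝ :=
  sSup ((fun z => ‖f z‖) '' Metric.closedBall (0 : ℂ) j)

/-- Convergence in `H(ℂ)`, i.e. uniform convergence on every compact subset of `ℂ`. -/
def TendstoH (F : ℕ → ℂ → ℂ) (f : ℂ → ℂ) : Prop :=
  ∀ j : ℕ, 1 ≤ j → Filter.Tendsto (fun k => pnorm j (F k - f)) Filter.atTop (nhds 0)

/-- A set of entire functions is dense in `H(ℂ)`. -/
def DenseH (S : Set (ℂ → ℂ)) : Prop :=
  ∀ f : ℂ → ℂ, Differentiable ℂ f → ∀ j : ℕ, 1 ≤ j → ∀ ε : ℝ, 0 < ε →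
    ∃ g ∈ S, pnorm j (g - f) < ε

/-- A set of entire functions is (sequentially) closed in `H(ℂ)`. -/
def ClosedH (M : Set (ℂ → ℂ)) : Prop :=
  ∀ (F : ℕ → ℂ → ℂ) (f : ℂ → ℂ), (∀ k, F k ∈ M) → Differentiable ℂ f →
    TendstoH F f → f ∈ M

/-- The operator `μ D`, `f ↦ μ f'`. -/
noncomputable def derivOp (μ : ℂ) : (ℂ → ℂ) → ℂ → ℂ := fun f z => μ * deriv f z

/-- The operator `μ T_a`, `f ↦ μ f(· + a)`. -/
def transOp (μ a : ℂ) : (ℂ → ℂ) → ℂ → ℂ := fun f z => μ * f (z + a)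

/-- The translation operator `T_a`, `f ↦ f(· + a)`. -/
def translOp (a : ℂ) : (ℂ → ℂ) → ℂ → ℂ := fun f z => f (z + a)

/-- `f` has dense orbit under `S` in `H(ℂ)`. -/
def HypercyclicFor (S : (ℂ → ℂ) → ℂ → ℂ) (f : ℂ → ℂ) : Prop :=
  ∀ g : ℂ → ℂ, Differentiable ℂ g → ∀ j : ℕ, 1 ≤ j → ∀ ε : ℝ, 0 < ε →
    ∃ n : ℕ, pnorm j (S^[n] f - g) < ε

/-- `M` is a closed infinite-dimensional subspace of `H(ℂ)`. -/
def IsClosedInfDimSubspaceH (M : Submodule ℂ (ℂ → ℂ)) : Prop :=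
  (∀ f ∈ M, Differentiable ℂ f) ∧ ClosedH (M : Set (ℂ → ℂ)) ∧ ¬ FiniteDimensional ℂ M

/-- `a` does not belong to the arc `{e^{iα} : α ∈ (-θ, θ)}` of the unit circle. -/
def OutsideArc (θ : ℝ) (a : ℂ) : Prop :=
  ∀ α : ℝ, -θ < α → α < θ → a ≠ Complex.exp (α * Complex.I)

/-- A sequence `(n_k)_{k ≥ 1}` of positive integers is `φ`-increasing. -/
def PhiIncreasing (φ : ℕ → ℕ) (n : ℕ → ℕ) : Prop :=
  (∀ k, 1 ≤ k → 1 ≤ n k) ∧ ∀ k, 1 ≤ k → n k + φ (n k) < n (k + 1)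

/-- `q` is a continuous seminorm on `H(ℂ)`. -/
def IsContinuousSeminormH (q : (ℂ → ℂ) → ℝ) : Prop :=
  (∀ f g : ℂ → ℂ, Differentiable ℂ f → Differentiable ℂ g → q (f + g) ≤ q f + q g) ∧
  (∀ (c : ℂ) (f : ℂ → ℂ), Differentiable ℂ f → q (c • f) = ‖c‖ * q f) ∧
  (∃ (C : ℝ) (i : ℕ), 0 < C ∧ 1 ≤ i ∧ ∀ f : ℂ → ℂ, Differentiable ℂ f → q f ≤ C * pnorm i f)

/-- `q` is a continuous norm on `H(ℂ)`. -/
def IsContinuousNormH (q : (ℂ → ℂ) → ℝ) : Prop :=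
  IsContinuousSeminormH q ∧ ∀ f : ℂ → ℂ, Differentiable ℂ f → q f = 0 → f = 0

section Helpers

open Polynomial Topology

/-! ### Entire functions, Taylor coefficients and Cauchy estimates -/

/-- `Bd r f ε` says that `‖f‖ ≤ ε` on the closed disc of radius `r` about `0`; for `f` continuous
and `r ≥ 0` it means `pnorm r f ≤ ε`. -/
def Bd (r : ℝ) (f : ℂ → ℂ) (ε : ℝ) : Prop := ∀ z : ℂ, ‖z‖ ≤ r → ‖f z‖ ≤ ε

/-- The `l`-th Taylor coefficient of `f` at `0`. -/
noncomputable def tc (l : ℕ) (f : ℂ → ℂ) : ℂ := iteratedDeriv l f 0 / (l.factorial : ℂ)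

/-- The polynomial function attached to a complex polynomial. -/
noncomputable def ev (p : ℂ[X]) : ℂ → ℂ := fun z => p.eval z

/-- The Taylor polynomial of `f` at `0` of degree `< N`. -/
noncomputable def tpoly (N : ℕ) (f : ℂ → ℂ) : ℂ[X] :=
  ∑ l ∈ Finset.range N, Polynomial.C (tc l f) * X ^ l

lemma Bd.mono {r r' : ℝ} {f : ℂ → ℂ} {ε ε' : ℝ} (h : Bd r f ε) (hr : r' ≤ r) (hε : ε ≤ ε') :
    Bd r' f ε' := fun z hz => (h z (hz.trans hr)).trans hε

lemma Bd.add {r : ℝ} {f g : ℂ → ℂ} {ε ε' : ℝ} (h : Bd r f ε) (h' : Bd r g ε') :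
    Bd r (f + g) (ε + ε') := fun z hz =>
  (norm_add_le _ _).trans (add_le_add (h z hz) (h' z hz))

lemma Bd.smul {r : ℝ} {f : ℂ → ℂ} {ε : ℝ} (c : ℂ) (h : Bd r f ε) :
    Bd r (c • f) (‖c‖ * ε) := fun z hz => by
  simpa using mul_le_mul_of_nonneg_left (h z hz) (norm_nonneg c)

lemma Bd.sum {ι : Type*} {r : ℝ} (s : Finset ι) {f : ι → ℂ → ℂ} {ε : ι → ℝ}
    (h : ∀ i ∈ s, Bd r (f i) (ε i)) : Bd r (∑ i ∈ s, f i) (∑ i ∈ s, ε i) := fun z hz => by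
  rw [Finset.sum_apply]
  exact norm_sum_le_of_le _ fun i hi => h i hi z hz

lemma exists_Bd {f : ℂ → ℂ} (hf : Differentiable ℂ f) (r : ℝ) : ∃ B : ℝ, 0 ≤ B ∧ Bd r f B := by
  obtain ⟨B, hB⟩ := (isCompact_closedBall (0 : ℂ) r).exists_bound_of_continuousOn
    hf.continuous.continuousOn
  exact ⟨max B 0, le_max_right _ _, fun z hz =>
    (hB z (by simpa using hz)).trans (le_max_left _ _)⟩

lemma pnorm_lt {r : ℝ} (hr : 0 ≤ r) {f : ℂ → ℂ} {ε ε' : ℝ} (h : Bd r f ε) (hε : ε < ε') :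
    pnorm r f < ε' := by
  refine lt_of_le_of_lt (csSup_le ?_ ?_) hε
  · exact (Metric.nonempty_closedBall.2 hr).image _
  · rintro _ ⟨z, hz, rfl⟩
    exact h z (by simpa using hz)

lemma Bd_pnorm {r : ℝ} {f : ℂ → ℂ} (hf : Differentiable ℂ f) : Bd r f (pnorm r f) := by
  intro z hz
  obtain ⟨B, -, hB⟩ := exists_Bd hf r
  refine le_csSup ⟨B, ?_⟩ ⟨z, by simpa using hz, rfl⟩
  rintro _ ⟨z, hz, rfl⟩
  exact hB z (by simpa using hz)

lemma ev_diff (p : ℂ[X]) : Differentiable ℂ (ev p) := p.differentiable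

lemma ev_add (p q : ℂ[X]) : ev (p + q) = ev p + ev q := by ext z; simp [ev]

lemma ev_sub (p q : ℂ[X]) : ev (p - q) = ev p - ev q := by ext z; simp [ev]

lemma ev_smul (c : ℂ) (q : ℂ[X]) : ev (c • q) = c • ev q := by ext z; simp [ev]

lemma ev_sum {ι : Type*} (s : Finset ι) (p : ι → ℂ[X]) :
    ev (∑ i ∈ s, p i) = ∑ i ∈ s, ev (p i) := by
  ext z; simp [ev, Polynomial.eval_finsetSum]

lemma tc_add (l : ℕ) {f g : ℂ → ℂ} (hf : Differentiable ℂ f) (hg : Differentiable ℂ g) :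
    tc l (f + g) = tc l f + tc l g := by
  unfold tc
  rw [iteratedDeriv_add hf.contDiff.contDiffAt hg.contDiff.contDiffAt, add_div]

lemma tc_smul (l : ℕ) (c : ℂ) (f : ℂ → ℂ) : tc l (c • f) = c * tc l f := by
  unfold tc
  rw [iteratedDeriv_const_smul_field, smul_eq_mul, mul_div_assoc]

lemma tc_sub (l : ℕ) {f g : ℂ → ℂ} (hf : Differentiable ℂ f) (hg : Differentiable ℂ g) :
    tc l (f - g) = tc l f - tc l g := by
  have : f - g = f + (-1 : ℂ) • g := by ext z; simp [sub_eq_add_neg]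
  rw [this, tc_add l hf (hg.const_smul _), tc_smul]; ring

lemma iteratedDeriv_ev (m : ℕ) (p : ℂ[X]) :
    iteratedDeriv m (ev p) = ev (derivative^[m] p) := by
  induction m with
  | zero => simp
  | succ m ih =>
    rw [iteratedDeriv_succ, ih, Function.iterate_succ_apply']
    ext z
    exact Polynomial.deriv _

lemma tc_ev (l : ℕ) (p : ℂ[X]) : tc l (ev p) = p.coeff l := by
  unfold tc
  rw [iteratedDeriv_ev, ev, ← Polynomial.coeff_zero_eq_eval_zero, coeff_iterate_derivative]
  have : ((l.factorial : ℕ) : ℂ) ≠ 0 := by exact_mod_cast l.factorial_ne_zero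
  simp [Nat.descFactorial_self]
  field_simp

/-- Cauchy estimate for Taylor coefficients. -/
lemma tc_bound (l : ℕ) {f : ℂ → ℂ} (hf : Differentiable ℂ f) {r B : ℝ} (hr : 0 < r)
    (h : Bd r f B) : ‖tc l f‖ ≤ B / r ^ l := by
  have := Complex.norm_iteratedDeriv_le_of_forall_mem_sphere_norm_le (c := 0) l hr
    hf.diffContOnCl (C := B) (fun z hz => h z (by simpa using hz.le))
  unfold tc
  have hl : (0 : ℝ) < l.factorial := by exact_mod_cast l.factorial_pos
  rw [norm_div, Complex.norm_natCast, div_le_iff₀ hl]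
  exact this.trans (le_of_eq (by ring))

lemma taylor_hasSum {f : ℂ → ℂ} (hf : Differentiable ℂ f) (z : ℂ) :
    HasSum (fun l => tc l f * z ^ l) (f z) := by
  have := Complex.hasSum_taylorSeries_of_entire hf 0 z
  have e : (fun l => tc l f * z ^ l) =
      fun n : ℕ => (n.factorial : ℂ)⁻¹ • (z - 0) ^ n • iteratedDeriv n f 0 := by
    ext l
    simp only [tc, sub_zero, smul_eq_mul]
    ring
  rw [e]; exact this

lemma tpoly_coeff (N : ℕ) (f : ℂ → ℂ) (l : ℕ) :
    (tpoly N f).coeff l = if l < N then tc l f else 0 := by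
  simp [tpoly, Polynomial.coeff_C_mul, Polynomial.coeff_X_pow]

/-- Taylor polynomials of an entire function converge uniformly on discs. -/
lemma taylor_unif {f : ℂ → ℂ} (hf : Differentiable ℂ f) (r : ℝ) {δ : ℝ} (hδ : 0 < δ) :
    ∃ N₀, ∀ N ≥ N₀, Bd r (f - ev (tpoly N f)) δ := by
  set r' : ℝ := max r 1
  have hr' : 0 < r' := lt_max_of_lt_right one_pos
  obtain ⟨B, hB0, hB⟩ := exists_Bd hf (2 * r')
  have hu : Summable (fun l : ℕ => B * (1 / 2 : ℝ) ^ l) := summable_geometric_two.mul_left B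
  have key := tendstoUniformlyOn_tsum_nat (f := fun l z => tc l f * z ^ l) hu
    (s := {z : ℂ | ‖z‖ ≤ r}) (fun l z hz => by
      have h1 := tc_bound l hf (by positivity) hB
      have h2 : ‖z‖ ^ l ≤ r' ^ l := pow_le_pow_left₀ (norm_nonneg _)
        (le_trans hz (le_max_left _ _)) _
      rw [norm_mul, norm_pow]
      refine (mul_le_mul h1 h2 (by positivity) (by positivity)).trans (le_of_eq ?_)
      rw [mul_pow, one_div, inv_pow]; field_simp)
  obtain ⟨N₀, hN₀⟩ := eventually_atTop.1 (Metric.tendstoUniformlyOn_iff.1 key δ hδ)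
  refine ⟨N₀, fun N hN z hz => ?_⟩
  have h3 := hN₀ N hN z hz
  rw [dist_eq_norm, (taylor_hasSum hf z).tsum_eq] at h3
  simpa [ev, tpoly, Polynomial.eval_finsetSum] using h3.le

lemma eq_zero_of_tc {f : ℂ → ℂ} (hf : Differentiable ℂ f) (h : ∀ l, tc l f = 0) : f = 0 := by
  ext z
  have := taylor_hasSum hf z
  simp only [h, zero_mul] at this
  exact this.unique hasSum_zero

/-- A countable family of polynomials that is dense in `H(ℂ)`. -/
lemma exists_dense_polys : ∃ G : ℕ → ℂ[X], ∀ f : ℂ → ℂ, Differentiable ℂ f →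
    ∀ r ε : ℝ, 0 < ε → ∃ l, Bd r (f - ev (G l)) ε := by
  obtain ⟨t, htc, htd⟩ := TopologicalSpace.exists_countable_dense ℂ
  have hne : t.Nonempty := htd.nonempty
  obtain ⟨d, hd⟩ := htc.exists_eq_range hne
  let P : List ℕ → ℂ[X] := fun L => ∑ i ∈ Finset.range L.length,
    Polynomial.C (d (L.getD i 0)) * X ^ i
  refine ⟨fun n => P ((Encodable.decode n).getD []), fun f hf r ε hε => ?_⟩
  obtain ⟨N, hN⟩ := taylor_unif hf r (half_pos hε)
  set r' : ℝ := max r 1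
  have hr' : 1 ≤ r' := le_max_right _ _
  set η : ℝ := ε / 2 / ((N + 1) * r' ^ N)
  have hη : 0 < η := by positivity
  have hx : ∀ i, ∃ x, ‖tc i f - d x‖ ≤ η := fun i => by
    obtain ⟨y, hy, hyt⟩ := htd.exists_dist_lt (tc i f) hη
    rw [hd] at hy
    obtain ⟨x, rfl⟩ := hy
    exact ⟨x, by rw [← dist_eq_norm]; exact hyt.le⟩
  choose x hx using hx
  refine ⟨Encodable.encode ((List.range N).map x), ?_⟩
  simp only [Encodable.encodek, Option.getD_some]
  have e : f - ev (P ((List.range N).map x)) = (f - ev (tpoly N f)) +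
      ∑ i ∈ Finset.range N, ev (Polynomial.C (tc i f - d (x i)) * X ^ i) := by
    rw [← ev_sum, sub_add, ← ev_sub]
    congr 2
    simp only [P, tpoly, List.length_map, List.length_range]
    rw [← Finset.sum_sub_distrib]
    refine Finset.sum_congr rfl fun i hi => ?_
    have hi' := Finset.mem_range.1 hi
    simp [List.getD_eq_getElem?_getD, hi', sub_mul]
  rw [e]
  refine ((hN N le_rfl).add (Bd.sum (ε := fun _ => η * r' ^ N) _ fun i hi => ?_)).mono le_rfl ?_
  · intro z hz
    simp only [ev, eval_mul, eval_C, eval_pow, eval_X, norm_mul, norm_pow]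
    refine mul_le_mul (hx i) ?_ (by positivity) hη.le
    exact (pow_le_pow_left₀ (norm_nonneg _) (hz.trans (le_max_left _ _)) _).trans
      (pow_le_pow_right₀ hr' (Finset.mem_range.1 hi).le)
  · simp only [Finset.sum_const, Finset.card_range, nsmul_eq_mul]
    have : (N : ℝ) * (η * r' ^ N) ≤ ((N : ℝ) + 1) * (η * r' ^ N) := by gcongr; linarith
    have h2 : ((N : ℝ) + 1) * (η * r' ^ N) = ε / 2 := by
      simp only [η]; field_simp
    linarith

/-! ### The function `z e^{-z/a}` and its truncated powers -/

/-- `ww a n z = (z e^{-z/a})ⁿ`. -/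
noncomputable def ww (a : ℂ) (n : ℕ) : ℂ → ℂ := fun z => (z * Complex.exp (-z / a)) ^ n

/-- A growth constant, uniform for both operators: `K j` dominates `|z e^{-z/a}|` on the disc of
radius `j + 1`, with room to spare. -/
noncomputable def KK (a : ℂ) (j : ℕ) : ℝ := 2 * ((j + 1) * Real.exp ((j + 1) / ‖a‖))

lemma KK_one_le (a : ℂ) (j : ℕ) : 1 ≤ KK a j := by
  have h1 : (1 : ℝ) ≤ Real.exp ((j + 1) / ‖a‖) := Real.one_le_exp (by positivity)
  have h2 : (0 : ℝ) ≤ j := j.cast_nonneg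
  unfold KK
  nlinarith

lemma ww_diff (a : ℂ) (n : ℕ) : Differentiable ℂ (ww a n) := by
  unfold ww; fun_prop

/-- The truncations `u` of the Taylor series of `(z e^{-z/a})ⁿ` have leading term `zⁿ` and
approximate it on discs. -/
lemma ww_trunc (a : ℂ) (n : ℕ) (r : ℝ) {δ : ℝ} (hδ : 0 < δ) :
    ∃ u : ℂ[X], X ^ n ∣ u ∧ u.coeff n = 1 ∧ Bd r (ev u - ww a n) δ := by
  set h : ℂ → ℂ := fun z => Complex.exp (n * (-z / a))
  have hh : Differentiable ℂ h := by fun_prop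
  set r' : ℝ := max r 1
  have hr' : 0 < r' := lt_max_of_lt_right one_pos
  obtain ⟨N, hN⟩ := taylor_unif hh r (δ := δ / r' ^ n) (by positivity)
  refine ⟨X ^ n * tpoly (N + 1) h, dvd_mul_right _ _, ?_, fun z hz => ?_⟩
  · have := Polynomial.coeff_X_pow_mul (tpoly (N + 1) h) n 0
    rw [zero_add] at this
    rw [this, tpoly_coeff]
    simp [tc, h]
  · have h1 := hN (N + 1) (by omega) z hz
    have h2 : ‖z‖ ^ n ≤ r' ^ n :=
      pow_le_pow_left₀ (norm_nonneg _) (le_trans hz (le_max_left _ _)) _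
    have e : (ev (X ^ n * tpoly (N + 1) h) - ww a n) z =
        -(z ^ n * (h - ev (tpoly (N + 1) h)) z) := by
      simp only [ev, ww, h, Pi.sub_apply, eval_mul, eval_pow, eval_X, mul_pow, ← Complex.exp_nat_mul]
      ring
    rw [e, norm_neg, norm_mul, norm_pow]
    refine (mul_le_mul h2 h1 (norm_nonneg _) (by positivity)).trans (le_of_eq ?_)
    field_simp

lemma ww_bd (a : ℂ) (n : ℕ) (r : ℝ) (hr : 0 ≤ r) :
    Bd r (ww a n) ((r * Real.exp (r / ‖a‖)) ^ n) := by
  intro z hz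
  simp only [ww, norm_pow, norm_mul]
  gcongr
  rw [Complex.norm_exp]
  apply Real.exp_le_exp.2
  refine (Complex.re_le_norm _).trans ?_
  rw [norm_div, norm_neg]
  gcongr

/-! ### The properties shared by `μD` and `T_a` -/

/-- The properties of the iterates `L m` of an operator on which the construction rests: linearity,
continuity, the possibility to steer `L m p` to any polynomial `g` by adding to `p` a small
polynomial of high order, and smallness of `L m (ww a n)` compared with `K jⁿ`. -/
structure GoodOp (a : ℂ) (L : ℕ → (ℂ → ℂ) → ℂ → ℂ) : Prop where
  add : ∀ m f g, Differentiable ℂ f → Differentiable ℂ g → L m (f + g) = L m f + L m g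
  smul : ∀ m (c : ℂ) f, Differentiable ℂ f → L m (c • f) = c • L m f
  cont : ∀ m (j : ℕ), ∃ C : ℝ, 0 ≤ C ∧ ∃ R : ℕ, ∀ f ε, Differentiable ℂ f →
    Bd R f ε → Bd j (L m f) (C * ε)
  corr : ∀ (p g : ℂ[X]) (R j N : ℕ) (δ : ℝ), 0 < δ → ∃ m₀, ∀ m ≥ m₀, ∃ q : ℂ[X],
    X ^ N ∣ q ∧ Bd R (ev q) δ ∧ Bd j (L m (ev (p + q)) - ev g) δ
  growth : ∀ s : ℕ, ∃ m₀, ∀ m ≥ m₀, ∃ n₀, ∀ n ≥ n₀, ∀ j : ℕ, j ≤ s →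
    Bd j (L m (ww a n)) (KK a j ^ n)

/-! ### The operator `μD` -/

lemma derivOp_iter (μ : ℂ) (m : ℕ) (f : ℂ → ℂ) :
    (derivOp μ)^[m] f = fun z => μ ^ m * iteratedDeriv m f z := by
  induction m with
  | zero => simp
  | succ m ih =>
    rw [Function.iterate_succ_apply', ih]
    ext z
    simp only [derivOp, deriv_const_mul_field, iteratedDeriv_succ]
    ring

/-- Cauchy estimate: the `m`-th derivative on the disc of radius `j` is controlled by the values
on the disc of radius `j + 1`. -/
lemma deriv_cont (μ : ℂ) (m j : ℕ) {f : ℂ → ℂ} {ε : ℝ} (hf : Differentiable ℂ f)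
    (h : Bd ((j + 1 : ℕ) : ℝ) f ε) :
    Bd j ((derivOp μ)^[m] f) (‖μ‖ ^ m * m.factorial * ε) := by
  intro z hz
  have := Complex.norm_iteratedDeriv_le_of_forall_mem_sphere_norm_le (c := z) m one_pos
    hf.diffContOnCl (C := ε) (fun w hw => h w (by
      have h1 : ‖w - z‖ = 1 := by simpa [dist_eq_norm] using hw
      have h2 : ‖w‖ ≤ ‖w - z‖ + ‖z‖ := by simpa using norm_add_le (w - z) z
      push_cast; linarith))
  rw [derivOp_iter, norm_mul, norm_pow, mul_assoc]
  gcongr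
  simpa using this

/-- Iterated antiderivatives of a polynomial tend to `0` in `H(ℂ)`. -/
lemma deriv_corr {μ : ℂ} (hμ : μ ≠ 0) (g : ℂ[X]) : ∀ (R N : ℕ) (δ : ℝ), 0 < δ →
    ∃ m₀, ∀ m ≥ m₀, ∃ q : ℂ[X], X ^ N ∣ q ∧ Bd R (ev q) δ ∧
      (derivOp μ)^[m] (ev q) = ev g := by
  induction g using Polynomial.induction_on' with
  | add p q hp hq =>
    intro R N δ hδ
    obtain ⟨m₁, h₁⟩ := hp R N (δ / 2) (half_pos hδ)
    obtain ⟨m₂, h₂⟩ := hq R N (δ / 2) (half_pos hδ)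
    refine ⟨max m₁ m₂, fun m hm => ?_⟩
    obtain ⟨r, hr1, hr2, hr3⟩ := h₁ m (le_of_max_le_left hm)
    obtain ⟨s, hs1, hs2, hs3⟩ := h₂ m (le_of_max_le_right hm)
    refine ⟨r + s, dvd_add hr1 hs1, ?_, ?_⟩
    · rw [ev_add]; exact (hr2.add hs2).mono le_rfl (by linarith)
    · rw [ev_add, ev_add, ← hr3, ← hs3]
      simp only [derivOp_iter]
      ext z
      simp only [Pi.add_apply]
      rw [iteratedDeriv_add (ev_diff r).contDiff.contDiffAt (ev_diff s).contDiff.contDiffAt]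
      ring
  | monomial k c =>
    intro R N δ hδ
    have ht := (FloorSemiring.tendsto_pow_div_factorial_atTop ((R : ℝ) / ‖μ‖)).const_mul
      (‖c‖ * k.factorial * ‖μ‖ ^ k)
    rw [mul_zero] at ht
    obtain ⟨m₁, h₁⟩ := eventually_atTop.1 (ht.eventually_le_const hδ)
    refine ⟨max m₁ N, fun m hm => ?_⟩
    have hfac : (((k + m).factorial : ℕ) : ℂ) ≠ 0 := by exact_mod_cast (k + m).factorial_ne_zero
    refine ⟨monomial (k + m) (c * k.factorial / (k + m).factorial * (μ ^ m)⁻¹), ?_, ?_, ?_⟩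
    · rw [← C_mul_X_pow_eq_monomial]
      exact (pow_dvd_pow X (by have := le_of_max_le_right hm; omega)).mul_left _
    · intro z hz
      have h2 := h₁ (k + m) (by have := le_of_max_le_left hm; omega)
      refine le_trans ?_ h2
      have hμ' : 0 < ‖μ‖ := norm_pos_iff.2 hμ
      have hz' : ‖z‖ ^ (k + m) ≤ (R : ℝ) ^ (k + m) := pow_le_pow_left₀ (norm_nonneg _) hz _
      simp only [ev, eval_monomial, norm_mul, norm_div, norm_pow, norm_inv, Complex.norm_natCast]
      refine (mul_le_mul_of_nonneg_left hz' (by positivity)).trans (le_of_eq ?_)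
      rw [div_pow, pow_add ‖μ‖]
      field_simp
    · rw [derivOp_iter, iteratedDeriv_ev]
      ext z
      have : derivative^[m] (monomial (k + m) (c * k.factorial / (k + m).factorial * (μ ^ m)⁻¹))
          = monomial k (c * (μ ^ m)⁻¹) := by
        ext l
        rw [coeff_iterate_derivative, coeff_monomial, coeff_monomial]
        by_cases hl : k = l
        · subst hl
          have h3 := Nat.factorial_mul_descFactorial (show m ≤ k + m by omega)
          rw [Nat.add_sub_cancel] at h3
          have h4 : ((k.factorial : ℕ) : ℂ) * ((k + m).descFactorial m : ℕ)
            = ((k + m).factorial : ℕ) := by exact_mod_cast h3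
          simp only [if_true, nsmul_eq_mul]
          field_simp
          rw [← h4]; ring
        · rw [if_neg hl, if_neg (by omega), smul_zero]
      rw [this]
      simp only [ev, eval_monomial]
      field_simp

lemma goodOp_deriv (a : ℂ) {μ : ℂ} (hμ : μ ≠ 0) : GoodOp a (fun m => (derivOp μ)^[m]) where
  add m f g hf hg := by
    simp only [derivOp_iter]
    ext z
    simp only [Pi.add_apply]
    rw [iteratedDeriv_add hf.contDiff.contDiffAt hg.contDiff.contDiffAt]
    ring
  smul m c f hf := by
    simp only [derivOp_iter]
    ext z
    simp only [Pi.smul_apply, smul_eq_mul, iteratedDeriv_const_smul_field]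
    ring
  cont m j := ⟨‖μ‖ ^ m * m.factorial, by positivity, j + 1, fun f ε hf h => deriv_cont μ m j hf h⟩
  corr p g R j N δ hδ := by
    obtain ⟨m₀, h₀⟩ := deriv_corr hμ g R N δ hδ
    refine ⟨max m₀ (p.natDegree + 1), fun m hm => ?_⟩
    obtain ⟨q, hq1, hq2, hq3⟩ := h₀ m (le_of_max_le_left hm)
    refine ⟨q, hq1, hq2, fun z hz => ?_⟩
    have hp : derivative^[m] p = 0 :=
      iterate_derivative_eq_zero (by have := le_of_max_le_right hm; omega)
    have : (derivOp μ)^[m] (ev (p + q)) = ev g := by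
      rw [← hq3]
      simp only [derivOp_iter, iteratedDeriv_ev, iterate_map_add, hp, zero_add]
    simp only [this, sub_self, Pi.zero_apply, norm_zero]
    exact hδ.le
  growth s := by
    refine ⟨0, fun m _ => ?_⟩
    obtain ⟨n₀, hn₀⟩ := eventually_atTop.1 ((tendsto_pow_atTop_atTop_of_one_lt
      (one_lt_two : (1 : ℝ) < 2)).eventually_ge_atTop (‖μ‖ ^ m * m.factorial))
    refine ⟨n₀, fun n hn j _ => ?_⟩
    refine (deriv_cont μ m j (ww_diff a n) (ww_bd a n _ (by positivity))).mono le_rfl ?_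
    unfold KK
    rw [mul_pow 2]
    push_cast
    exact mul_le_mul_of_nonneg_right (hn₀ n hn) (by positivity)

/-! ### The operator `T_a` -/

lemma translOp_iter (a : ℂ) (m : ℕ) (f : ℂ → ℂ) :
    (translOp a)^[m] f = fun z => f (z + m * a) := by
  induction m with
  | zero => simp
  | succ m ih =>
    rw [Function.iterate_succ_apply', ih]
    ext z
    simp only [translOp]
    congr 1
    push_cast; ring

lemma poly_growth (P : ℂ[X]) : ∃ A : ℝ, 0 ≤ A ∧ ∃ d : ℕ, ∀ z : ℂ,
    ‖P.eval z‖ ≤ A * (1 + ‖z‖) ^ d := by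
  refine ⟨∑ i ∈ Finset.range (P.natDegree + 1), ‖P.coeff i‖,
    Finset.sum_nonneg fun _ _ => norm_nonneg _, P.natDegree, fun z => ?_⟩
  rw [eval_eq_sum_range, Finset.sum_mul]
  refine norm_sum_le_of_le _ fun i hi => ?_
  rw [norm_mul, norm_pow]
  refine mul_le_mul_of_nonneg_left ?_ (norm_nonneg _)
  exact (pow_le_pow_left₀ (norm_nonneg _) (by linarith) _).trans
    (pow_le_pow_right₀ (by linarith [norm_nonneg z])
      (Nat.lt_succ_iff.1 (Finset.mem_range.1 hi)))

lemma one_sub_pow_bound (n : ℕ) {x : ℂ} (hx : ‖x‖ ≤ 1) : ‖1 - (1 + x) ^ n‖ ≤ 2 ^ n * ‖x‖ := by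
  induction n with
  | zero => simp
  | succ n ih =>
    have e : 1 - (1 + x) ^ (n + 1) = (1 - (1 + x) ^ n) - x * (1 + x) ^ n := by ring
    have h1 : ‖(1 + x) ^ n‖ ≤ 2 ^ n := by
      rw [norm_pow]
      refine pow_le_pow_left₀ (norm_nonneg _) ?_ _
      refine (norm_add_le _ _).trans ?_
      rw [norm_one]; linarith
    rw [e]
    refine (norm_sub_le _ _).trans ?_
    rw [norm_mul, pow_succ]
    have := mul_le_mul_of_nonneg_left h1 (norm_nonneg x)
    nlinarith

/-- Interpolation between the disc of radius `R` about `0` and the disc of radius `j` about a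
distant point `b`: the polynomial `(g(z - b) - p(z)) χ(z/b)` with `χ(w) = 1 - (1 - wⁿ)ⁿ`
is small on the first disc, as `χ` vanishes to order `n` at `0`, and is close to `g(z - b) - p(z)`
on the second one, as `1 - χ` vanishes to order `n` at `1`. -/
lemma transl_corr (p g : ℂ[X]) (R j N : ℕ) {δ : ℝ} (hδ : 0 < δ) :
    ∃ b₀ : ℝ, ∀ b : ℂ, b₀ ≤ ‖b‖ → ∃ q : ℂ[X], X ^ N ∣ q ∧ Bd R (ev q) δ ∧
      ∀ z : ℂ, ‖z‖ ≤ j → ‖(p + q).eval (z + b) - g.eval z‖ ≤ δ := by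
  obtain ⟨A, hA, d, hp⟩ := poly_growth p
  obtain ⟨B, hB, e, hg⟩ := poly_growth g
  set D := max d e
  set n := max N (D + 1)
  set r : ℝ := R + j + 2
  have hRn : (0 : ℝ) ≤ R := R.cast_nonneg
  have hjn : (0 : ℝ) ≤ j := j.cast_nonneg
  -- all quantities to be estimated are at most `M / ‖b‖`
  set M : ℝ := (A + B) * r ^ D * (2 ^ n * r) ^ n
  refine ⟨max (2 ^ n * r) (M / δ), fun b hb => ?_⟩
  have hb1 : 2 ^ n * r ≤ ‖b‖ := (le_max_left _ _).trans hb
  have hb2 : M / δ ≤ ‖b‖ := (le_max_right _ _).trans hb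
  have h2n : (1 : ℝ) ≤ 2 ^ n := one_le_pow₀ one_le_two
  have hr2 : 2 ≤ r := by simp only [r]; linarith
  have hbr : r ≤ ‖b‖ := le_trans (by nlinarith) hb1
  have hb0 : 0 < ‖b‖ := by linarith
  have hbne : b ≠ 0 := norm_pos_iff.1 hb0
  have hMb : M / ‖b‖ ≤ δ := by
    rw [div_le_iff₀ hb0]; rw [div_le_iff₀ hδ] at hb2; linarith
  have hnD : D + 1 ≤ n := le_max_right _ _
  have hrb : 2 ^ n * r / ‖b‖ ≤ 1 := (div_le_one hb0).2 hb1
  -- growth of `p` and `g` near the two discs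
  have grow : ∀ x y : ℂ, 1 + ‖x‖ ≤ r * ‖b‖ → 1 + ‖y‖ ≤ r * ‖b‖ →
      ‖g.eval y - p.eval x‖ ≤ (A + B) * (r * ‖b‖) ^ D := by
    intro x y hx hy
    have hrb1 : 1 ≤ r * ‖b‖ := by nlinarith
    have h1 : ‖p.eval x‖ ≤ A * (r * ‖b‖) ^ D := (hp x).trans <| by
      refine mul_le_mul_of_nonneg_left ?_ hA
      exact (pow_le_pow_left₀ (by positivity) hx _).trans
        (pow_le_pow_right₀ hrb1 (le_max_left _ _))
    have h2 : ‖g.eval y‖ ≤ B * (r * ‖b‖) ^ D := (hg y).trans <| by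
      refine mul_le_mul_of_nonneg_left ?_ hB
      exact (pow_le_pow_left₀ (by positivity) hy _).trans
        (pow_le_pow_right₀ hrb1 (le_max_right _ _))
    refine (norm_sub_le _ _).trans ?_
    linarith
  have final : ∀ (x y : ℂ), ‖x‖ ≤ (A + B) * (r * ‖b‖) ^ D →
      ‖y‖ ≤ (2 ^ n * r / ‖b‖) ^ n → ‖x * y‖ ≤ δ := by
    intro x y hx hy
    rw [norm_mul]
    refine (mul_le_mul hx hy (norm_nonneg _) (by positivity)).trans (le_trans ?_ hMb)
    rw [div_pow, mul_pow r ‖b‖]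
    have h3 : ‖b‖ ^ D * ‖b‖ ≤ ‖b‖ ^ n := by
      rw [← pow_succ]; exact pow_le_pow_right₀ (by linarith) hnD
    have e1 : (A + B) * (r ^ D * ‖b‖ ^ D) * ((2 ^ n * r) ^ n / ‖b‖ ^ n) =
        M * ‖b‖ ^ D / ‖b‖ ^ n := by simp only [M]; ring
    rw [e1, div_le_div_iff₀ (by positivity) hb0, mul_assoc]
    exact mul_le_mul_of_nonneg_left h3 (by positivity)
  refine ⟨(g.comp (X - Polynomial.C b) - p) *
    (1 - (1 - (X * Polynomial.C b⁻¹) ^ n) ^ n), ?_, ?_, ?_⟩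
  · refine Dvd.dvd.mul_left ?_ _
    have h1 := sub_dvd_pow_sub_pow (1 : ℂ[X]) (1 - (X * Polynomial.C b⁻¹) ^ n) n
    rw [one_pow, sub_sub_cancel] at h1
    exact (pow_dvd_pow X (le_max_left _ _)).trans
      ((pow_dvd_pow_of_dvd (dvd_mul_right X _) n).trans h1)
  · intro z hz
    simp only [ev, eval_mul, eval_sub, eval_comp, eval_X, eval_C, eval_one, eval_pow]
    have hw : ‖z * b⁻¹‖ ≤ r / ‖b‖ := by
      rw [norm_mul, norm_inv, ← div_eq_mul_inv]
      gcongr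
      simp only [r]; linarith
    have hw1 : ‖z * b⁻¹‖ ≤ 1 := hw.trans ((div_le_one hb0).2 hbr)
    apply final
    · apply grow
      · nlinarith
      · have := norm_sub_le z b
        nlinarith
    · have h1 := one_sub_pow_bound n (x := -(z * b⁻¹) ^ n) (by
        rw [norm_neg, norm_pow]; exact pow_le_one₀ (norm_nonneg _) hw1)
      rw [← sub_eq_add_neg, norm_neg, norm_pow] at h1
      refine h1.trans ?_
      have h2 : ‖z * b⁻¹‖ ^ n ≤ (r / ‖b‖) ^ n := pow_le_pow_left₀ (norm_nonneg _) hw _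
      rw [mul_div_assoc, mul_pow]
      have h3 : (2 : ℝ) ^ n ≤ (2 ^ n) ^ n :=
        le_self_pow₀ h2n (by omega)
      exact mul_le_mul h3 h2 (by positivity) (by positivity)
  · intro z hz
    have e1 : (p + (g.comp (X - Polynomial.C b) - p) *
        (1 - (1 - (X * Polynomial.C b⁻¹) ^ n) ^ n)).eval (z + b) - g.eval z =
        (g.eval z - p.eval (z + b)) * -((1 - (1 + z * b⁻¹) ^ n) ^ n) := by
      simp only [eval_mul, eval_sub, eval_comp, eval_X, eval_C, eval_one, eval_pow, eval_add,
        add_sub_cancel_right]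
      have : (z + b) * b⁻¹ = 1 + z * b⁻¹ := by field_simp; ring
      rw [this]; ring
    have hw : ‖z * b⁻¹‖ ≤ r / ‖b‖ := by
      rw [norm_mul, norm_inv, ← div_eq_mul_inv]
      gcongr
      simp only [r]; linarith
    have hw1 : ‖z * b⁻¹‖ ≤ 1 := hw.trans ((div_le_one hb0).2 hbr)
    rw [e1]
    apply final
    · apply grow
      · have := norm_add_le z b
        nlinarith
      · nlinarith
    · rw [norm_neg, norm_pow]
      refine pow_le_pow_left₀ (norm_nonneg _) ?_ _
      refine (one_sub_pow_bound n hw1).trans ?_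
      rw [mul_div_assoc]
      gcongr

lemma goodOp_transl {a : ℂ} (ha : a ≠ 0) : GoodOp a (fun m => (translOp a)^[m]) where
  add m f g _ _ := by simp only [translOp_iter]; rfl
  smul m c f _ := by simp only [translOp_iter]; rfl
  cont m j := by
    refine ⟨1, zero_le_one, j + ⌈m * ‖a‖⌉₊, fun f ε _ h z hz => ?_⟩
    rw [translOp_iter, one_mul]
    apply h
    have h1 := norm_add_le z (m * a)
    rw [norm_mul, Complex.norm_natCast] at h1
    have h2 := Nat.le_ceil (m * ‖a‖)
    push_cast; linarith
  corr p g R j N δ hδ := by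
    obtain ⟨b₀, hb⟩ := transl_corr p g R j N hδ
    have ha' : 0 < ‖a‖ := norm_pos_iff.2 ha
    refine ⟨⌈b₀ / ‖a‖⌉₊, fun m hm => ?_⟩
    have h1 : b₀ ≤ ‖(m : ℂ) * a‖ := by
      rw [norm_mul, Complex.norm_natCast, ← div_le_iff₀ ha']
      exact (Nat.le_ceil _).trans (by exact_mod_cast hm)
    obtain ⟨q, h1, h2, h3⟩ := hb _ h1
    refine ⟨q, h1, h2, fun z hz => ?_⟩
    rw [translOp_iter]
    exact h3 z hz
  growth s := by
    have ha' : 0 < ‖a‖ := norm_pos_iff.2 ha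
    -- on the disc of radius `s` about `m a` one has `|z e^{-z/a}| ≤ (s + m|a|) e^{s/|a|} e^{-m}`
    have t1 : Tendsto (fun x : ℝ => (s + x * ‖a‖) * Real.exp (s / ‖a‖) * Real.exp (-x))
        atTop (𝓝 0) := by
      have h1 := Real.tendsto_pow_mul_exp_neg_atTop_nhds_zero 1
      have h0 := Real.tendsto_pow_mul_exp_neg_atTop_nhds_zero 0
      have := (h0.const_mul (s * Real.exp (s / ‖a‖))).add
        (h1.const_mul (‖a‖ * Real.exp (s / ‖a‖)))
      simp only [mul_zero, add_zero] at this
      refine this.congr fun x => ?_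
      simp only [pow_zero, pow_one]; ring
    obtain ⟨m₀, hm₀⟩ := eventually_atTop.1
      ((t1.comp tendsto_natCast_atTop_atTop).eventually_le_const one_pos)
    refine ⟨m₀, fun m hm => ⟨0, fun n _ j hj z hz => ?_⟩⟩
    refine le_trans ?_ (one_le_pow₀ (KK_one_le a j))
    rw [translOp_iter]
    simp only [ww, norm_pow]
    refine pow_le_one₀ (norm_nonneg _) (le_trans ?_ (hm₀ m hm))
    have hz' : ‖z‖ ≤ s := hz.trans (by exact_mod_cast hj)
    have e : -(z + m * a) / a = -(z / a) + ((-m : ℝ) : ℂ) := by push_cast; field_simp; ring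
    rw [norm_mul, e, Complex.exp_add, norm_mul, ← Complex.ofReal_exp, Complex.norm_real,
      Real.norm_of_nonneg (Real.exp_pos _).le, ← mul_assoc]
    simp only [Function.comp]
    have h1 : ‖z + m * a‖ ≤ s + m * ‖a‖ := by
      have := norm_add_le z (m * a)
      rw [norm_mul, Complex.norm_natCast] at this
      linarith
    have h2 : ‖Complex.exp (-(z / a))‖ ≤ Real.exp (s / ‖a‖) := by
      rw [Complex.norm_exp]
      apply Real.exp_le_exp.2
      refine (Complex.re_le_norm _).trans ?_
      rw [norm_neg, norm_div]
      gcongr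
    gcongr

/-! ### The inductive construction -/

/-- A stage of the construction: `E i` is the current approximation of the `i`-th generator, of
degree `< N`; the perturbations made in the next step are at most `δ` on the disc of radius `R`. -/
structure St where
  E : ℕ → ℂ[X]
  N : ℕ
  R : ℕ
  δ : ℝ
  δ_pos : 0 < δ
  deg : ∀ i l, N ≤ l → (E i).coeff l = 0

/-- The passage from `σ` to `σ'` at time `t`: a new generator `u`, a truncation of
`(z e^{-z/a})ᴺ`, is introduced, and the generators of index `i ≤ t` receive corrections `q i` such
that `L m` maps them near the polynomials `tgt i`. The field `cont` guarantees that later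
perturbations do not spoil this. -/
structure Step (a : ℂ) (L : ℕ → (ℂ → ℂ) → ℂ → ℂ) (t : ℕ) (tgt : ℕ → ℂ[X]) (σ σ' : St) where
  u : ℂ[X]
  q : ℕ → ℂ[X]
  m : ℕ
  u_dvd : X ^ σ.N ∣ u
  u_coeff : u.coeff σ.N = 1
  u_bd : Bd σ.R (ev u - ww a σ.N) σ.δ
  q_dvd : ∀ i ≤ t, X ^ (σ.N + 1) ∣ q i
  q_bd : ∀ i ≤ t, Bd σ.R (ev (q i)) σ.δ
  E_lt : ∀ i < t, σ'.E i = σ.E i + q i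
  E_eq : σ'.E t = u + q t
  tgt_bd : ∀ i ≤ t, Bd t (L m (ev (σ'.E i)) - ev (tgt i)) ((1 / 2) ^ t)
  growth : ∀ n ≥ σ'.N, ∀ j : ℕ, j ≤ t → Bd j (L m (ww a n)) (KK a j ^ n)
  cont : ∃ C : ℝ, 0 ≤ C ∧ C * σ'.δ ≤ (1 / 2) ^ (t + 1) ∧
    ∀ f ε, Differentiable ℂ f → Bd σ'.R f ε → Bd t (L m f) (C * ε)
  N_lt : σ.N < σ'.N
  R_lt : σ.R < σ'.R
  δ_le : σ'.δ ≤ σ.δ / 2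

/-- One step of the construction. The order of the choices matters: first the iterate `m`, then
the degree `N` (large in terms of `m`) and the tolerance `δ` (small in terms of `m`). -/
lemma exists_step {a : ℂ} {L : ℕ → (ℂ → ℂ) → ℂ → ℂ} (hL : GoodOp a L) (t : ℕ) (tgt : ℕ → ℂ[X])
    (σ : St) : ∃ σ' : St, Nonempty (Step a L t tgt σ σ') := by
  obtain ⟨u, hu1, hu2, hu3⟩ := ww_trunc a σ.N σ.R σ.δ_pos
  set P : ℕ → ℂ[X] := fun i => if i < t then σ.E i else u with hP
  have hη : 0 < min σ.δ ((1 / 2 : ℝ) ^ t) := lt_min σ.δ_pos (by positivity)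
  choose m₀ hm₀ using fun i => hL.corr (P i) (tgt i) σ.R t (σ.N + 1) _ hη
  obtain ⟨m₁, hm₁⟩ := hL.growth t
  set m := max m₁ ((Finset.range (t + 1)).sup m₀) with hm
  obtain ⟨n₀, hn₀⟩ := hm₁ m (le_max_left _ _)
  have hq : ∀ i, ∃ q : ℂ[X], i ≤ t → X ^ (σ.N + 1) ∣ q ∧
      Bd σ.R (ev q) (min σ.δ ((1 / 2 : ℝ) ^ t)) ∧
      Bd t (L m (ev (P i + q)) - ev (tgt i)) (min σ.δ ((1 / 2 : ℝ) ^ t)) := by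
    intro i
    by_cases hi : i ≤ t
    · obtain ⟨q, hq⟩ := hm₀ i m ((Finset.le_sup (f := m₀)
        (Finset.mem_range.2 (Nat.lt_succ_of_le hi))).trans (le_max_right _ _))
      exact ⟨q, fun _ => hq⟩
    · exact ⟨0, fun h => absurd h hi⟩
  choose q hq using hq
  obtain ⟨C, hC0, R₀, hC⟩ := hL.cont m t
  set E' : ℕ → ℂ[X] := fun i => if i ≤ t then P i + q i else 0 with hE'
  set N' : ℕ := max (σ.N + 1) n₀ + ∑ i ∈ Finset.range (t + 1), ((E' i).natDegree + 1) with hN'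
  have hN1 : σ.N + 1 ≤ N' := (le_max_left _ _).trans (Nat.le_add_right _ _)
  have hN2 : n₀ ≤ N' := (le_max_right _ _).trans (Nat.le_add_right _ _)
  have hδ1 : (0 : ℝ) < (1 / 2) ^ (t + 1) / (C + 1) := by positivity
  refine ⟨⟨E', N', max R₀ (σ.R + 1), min (σ.δ / 2) ((1 / 2) ^ (t + 1) / (C + 1)),
    lt_min (half_pos σ.δ_pos) hδ1, ?_⟩, ⟨⟨u, q, m, hu1, hu2, hu3, fun i hi => (hq i hi).1,
    fun i hi => (hq i hi).2.1.mono le_rfl (min_le_left _ _), ?_, ?_, ?_,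
    fun n hn => hn₀ n (hN2.trans hn), ⟨C, hC0, ?_, ?_⟩, hN1,
    (Nat.lt_succ_self _).trans_le (le_max_right _ _),
    min_le_left _ _⟩⟩⟩
  · intro i l hl
    by_cases hi : i ≤ t
    · refine coeff_eq_zero_of_natDegree_lt (lt_of_lt_of_le ?_ hl)
      have := Finset.single_le_sum (f := fun i => (E' i).natDegree + 1) (fun _ _ => Nat.zero_le _)
        (Finset.mem_range.2 (Nat.lt_succ_of_le hi))
      exact (Nat.lt_succ_self _).trans_le (this.trans (Nat.le_add_left _ _))
    · simp [hE', hi]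
  · intro i hi
    simp [hE', hP, hi.le, hi]
  · simp [hE', hP]
  · intro i hi
    have := (hq i hi).2.2.mono le_rfl (min_le_right _ _)
    simpa only [hE', if_pos hi] using this
  · calc C * min (σ.δ / 2) ((1 / 2) ^ (t + 1) / (C + 1))
        ≤ (C + 1) * ((1 / 2) ^ (t + 1) / (C + 1)) :=
          mul_le_mul (by linarith) (min_le_right _ _)
            (lt_min (half_pos σ.δ_pos) hδ1).le (by linarith)
      _ = (1 / 2) ^ (t + 1) := by field_simp
  · intro f ε hf h
    exact hC f ε hf (h.mono (by push_cast; exact le_max_left _ _) le_rfl)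

/-- The result of the inductive construction for the tasks `(L t, tgt t)`, `t ∈ ℕ`. -/
structure Sys (a : ℂ) (L : ℕ → ℕ → (ℂ → ℂ) → ℂ → ℂ) (tgt : ℕ → ℕ → ℂ[X]) where
  σ : ℕ → St
  step : ∀ t, Step a (L t) t (tgt t) (σ t) (σ (t + 1))
  δ_zero : (σ 0).δ ≤ 1

lemma exists_sys {a : ℂ} {L : ℕ → ℕ → (ℂ → ℂ) → ℂ → ℂ} (hL : ∀ t, GoodOp a (L t))
    (tgt : ℕ → ℕ → ℂ[X]) : Nonempty (Sys a L tgt) := by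
  choose next hnext using fun t σ => exists_step (hL t) t (tgt t) σ
  let σ₀ : St := ⟨fun _ => 0, 0, 0, 1, one_pos, fun _ _ _ => by simp⟩
  exact ⟨⟨fun t => Nat.rec σ₀ next t, fun t => (hnext t _).some, le_rfl⟩⟩

namespace Sys

variable {a : ℂ} {L : ℕ → ℕ → (ℂ → ℂ) → ℂ → ℂ} {tgt : ℕ → ℕ → ℂ[X]} (S : Sys a L tgt)

/-- The degree `N k` at which the `k`-th generator starts; the Taylor coefficient of this degree
is the coordinate functional of the `k`-th generator. -/
def N (k : ℕ) : ℕ := (S.σ k).N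

/-- The `i`-th generator as it stands at time `t`. -/
def E (t i : ℕ) : ℂ[X] := (S.σ t).E i

lemma N_strictMono : StrictMono S.N := strictMono_nat_of_lt_succ fun t => (S.step t).N_lt

lemma R_strictMono : StrictMono (fun t => (S.σ t).R) :=
  strictMono_nat_of_lt_succ fun t => (S.step t).R_lt

lemma δ_le {t s : ℕ} (h : t ≤ s) : (S.σ s).δ ≤ (S.σ t).δ * (1 / 2) ^ (s - t) := by
  induction s, h using Nat.le_induction with
  | base => simp
  | succ s h ih =>
    rw [Nat.succ_sub h, pow_succ]
    have := (S.step s).δ_le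
    linarith

lemma δ_le_pow (t : ℕ) : (S.σ t).δ ≤ (1 / 2) ^ t := by
  refine (S.δ_le (Nat.zero_le t)).trans ?_
  have := mul_le_mul_of_nonneg_right S.δ_zero (show (0 : ℝ) ≤ (1 / 2) ^ t by positivity)
  simpa using this

lemma E_succ_coeff {t i l : ℕ} (hi : i < t) (hl : l ≤ S.N t) :
    (S.E (t + 1) i).coeff l = (S.E t i).coeff l := by
  have h1 := X_pow_dvd_iff.1 ((S.step t).q_dvd i hi.le) l (Nat.lt_succ_of_le hl)
  simp only [E, (S.step t).E_lt i hi, coeff_add, h1, add_zero]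

lemma E_coeff_stable {t s i l : ℕ} (hi : i < t) (hts : t ≤ s) (hl : l < S.N t) :
    (S.E s i).coeff l = (S.E t i).coeff l := by
  induction s, hts using Nat.le_induction with
  | base => rfl
  | succ s h ih =>
    rw [S.E_succ_coeff (hi.trans_le h) (hl.le.trans (S.N_strictMono.monotone h)), ih]

lemma E_diag_coeff {i l : ℕ} (hl : l ≤ S.N i) :
    (S.E (i + 1) i).coeff l = if l = S.N i then 1 else 0 := by
  have h1 := X_pow_dvd_iff.1 ((S.step i).q_dvd i le_rfl) l (Nat.lt_succ_of_le hl)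
  simp only [E, (S.step i).E_eq, coeff_add, h1, add_zero]
  split_ifs with h
  · rw [h]; exact (S.step i).u_coeff
  · exact X_pow_dvd_iff.1 (S.step i).u_dvd l (lt_of_le_of_ne hl h)

/-! ### The subspace -/

/-- The space of entire functions whose Taylor polynomial of degree `< N t` is, for each `t`, the
combination of the polynomials `E t i`, `i < t`, with coefficients the coordinates `tc (N i) f`.
These are the functions `∑ cᵢ eᵢ`, where `eᵢ = lim E t i`; the present form makes closedness
obvious. -/
def M : Submodule ℂ (ℂ → ℂ) where
  carrier := {f | Differentiable ℂ f ∧ ∀ t, ∀ l < S.N t,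
    tc l f = ∑ i ∈ Finset.range t, tc (S.N i) f * (S.E t i).coeff l}
  add_mem' := by
    rintro f g ⟨hf, hf'⟩ ⟨hg, hg'⟩
    refine ⟨hf.add hg, fun t l hl => ?_⟩
    simp only [tc_add _ hf hg, hf' t l hl, hg' t l hl, add_mul, Finset.sum_add_distrib]
  zero_mem' := by
    have h0 : ∀ l, tc l (0 : ℂ → ℂ) = 0 := fun l => by simpa using tc_smul l 0 0
    exact ⟨differentiable_const 0, fun t l _ => by simp only [h0, zero_mul, Finset.sum_const_zero]⟩
  smul_mem' := by
    rintro c f ⟨hf, hf'⟩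
    refine ⟨hf.const_smul c, fun t l hl => ?_⟩
    simp only [tc_smul, hf' t l hl, Finset.mul_sum, mul_assoc]

lemma M_closed : ClosedH (S.M : Set (ℂ → ℂ)) := by
  intro F f hF hf h
  -- Taylor coefficients are continuous functionals
  have ht : ∀ l, Tendsto (fun k => tc l (F k)) atTop (𝓝 (tc l f)) := by
    intro l
    rw [tendsto_iff_norm_sub_tendsto_zero]
    refine squeeze_zero (fun _ => norm_nonneg _) (fun k => ?_) (h 1 le_rfl)
    rw [← tc_sub l (hF k).1 hf]
    have := tc_bound l ((hF k).1.sub hf) one_pos (Bd_pnorm (r := 1) ((hF k).1.sub hf))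
    simpa using this
  refine ⟨hf, fun t l hl => ?_⟩
  refine tendsto_nhds_unique (ht l) ?_
  simp only [(hF _).2 t l hl]
  exact tendsto_finsetSum _ fun i _ => (ht _).mul_const _

end Sys

/-- A sequence of polynomials with summable increments on discs converges to an entire function,
whose Taylor coefficients are the eventual values of the coefficients. -/
lemma exists_limit (P : ℕ → ℂ[X]) (hP : ∀ t : ℕ, Bd t (ev (P (t + 1)) - ev (P t)) ((1 / 2) ^ t)) :
    ∃ e : ℂ → ℂ, Differentiable ℂ e ∧
      ∀ l c, (∀ᶠ t in atTop, (P t).coeff l = c) → tc l e = c := by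
  have h1 : ∀ (t : ℕ) (z : ℂ), ‖z‖ ≤ t → ∀ s, dist (ev (P (t + s)) z) (ev (P (t + (s + 1))) z) ≤
      (1 / 2) ^ t * (1 / 2) ^ s := by
    intro t z hz s
    rw [dist_comm, dist_eq_norm, ← pow_add]
    exact hP (t + s) z (hz.trans (by push_cast; linarith [(s.cast_nonneg : (0 : ℝ) ≤ s)]))
  have h2 : ∀ z, ∃ w, Tendsto (fun t => ev (P t) z) atTop (𝓝 w) := by
    intro z
    obtain ⟨t, ht⟩ := exists_nat_ge ‖z‖
    obtain ⟨w, hw⟩ := cauchySeq_tendsto_of_complete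
      (cauchySeq_of_le_geometric _ _ (by norm_num) (h1 t z ht))
    refine ⟨w, (tendsto_add_atTop_iff_nat t).1 (hw.congr fun s => by rw [add_comm])⟩
  choose e he using h2
  have h3 : ∀ (t : ℕ) (z : ℂ), ‖z‖ ≤ t → dist (ev (P t) z) (e z) ≤ (1 / 2) ^ t * 2 := by
    intro t z hz
    have := dist_le_of_le_geometric_of_tendsto₀ _ _ (by norm_num) (h1 t z hz)
      (((tendsto_add_atTop_iff_nat t).2 (he z)).congr fun s => by rw [add_comm])
    exact this.trans (le_of_eq (by ring))
  have h4 : Tendsto (fun t : ℕ => (1 / 2 : ℝ) ^ t * 2) atTop (𝓝 0) := by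
    simpa using (tendsto_pow_atTop_nhds_zero_of_lt_one (r := (1 / 2 : ℝ)) (by norm_num)
      (by norm_num)).mul_const 2
  have hd : Differentiable ℂ e := by
    intro z
    obtain ⟨r, hr⟩ := exists_nat_gt ‖z‖
    have hu : TendstoUniformlyOn (fun t => ev (P t)) e atTop (ball 0 r) := by
      rw [Metric.tendstoUniformlyOn_iff]
      intro ε hε
      filter_upwards [h4.eventually_lt_const hε, eventually_ge_atTop r] with t ht htr w hw
      rw [dist_comm]
      refine (h3 t w ?_).trans_lt ht
      have hw' : ‖w‖ < r := by simpa using hw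
      exact hw'.le.trans (by exact_mod_cast htr)
    have := hu.tendstoLocallyUniformlyOn.differentiableOn
      (Eventually.of_forall fun t => (ev_diff (P t)).differentiableOn) isOpen_ball
    exact this.differentiableAt (isOpen_ball.mem_nhds (by simpa using hr))
  refine ⟨e, hd, fun l c hc => ?_⟩
  rw [← sub_eq_zero, ← norm_eq_zero]
  refine le_antisymm (ge_of_tendsto h4 ?_) (norm_nonneg _)
  filter_upwards [hc, eventually_ge_atTop 1] with t ht ht1
  have h5 : Bd 1 (e - ev (P t)) ((1 / 2) ^ t * 2) := fun z hz => by
    have := h3 t z (hz.trans (by exact_mod_cast ht1))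
    rwa [dist_comm, dist_eq_norm] at this
  have h6 := tc_bound l (hd.sub (ev_diff _)) one_pos h5
  rw [tc_sub l hd (ev_diff _), tc_ev, ht] at h6
  simpa using h6

namespace Sys

variable {a : ℂ} {L : ℕ → ℕ → (ℂ → ℂ) → ℂ → ℂ} {tgt : ℕ → ℕ → ℂ[X]} (S : Sys a L tgt)

/-- The generators `eᵢ = lim E t i` of `M`, biorthogonal to the coordinate functionals. -/
lemma exists_gen (i : ℕ) : ∃ e ∈ S.M, ∀ k, tc (S.N k) e = if k = i then 1 else 0 := by
  obtain ⟨e, hd, he⟩ := exists_limit (fun t => S.E (i + 1 + t) i) (fun t => by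
    have h1 : ev (S.E (i + 1 + (t + 1)) i) - ev (S.E (i + 1 + t) i) =
        ev ((S.step (i + 1 + t)).q i) := by
      rw [← ev_sub]
      congr 1
      have := (S.step (i + 1 + t)).E_lt i (by omega)
      simp only [E, ← add_assoc] at this ⊢
      rw [this, add_sub_cancel_left]
    rw [h1]
    refine ((S.step (i + 1 + t)).q_bd i (by omega)).mono ?_ ((S.δ_le_pow _).trans ?_)
    · have := S.R_strictMono.le_apply (x := i + 1 + t)
      exact_mod_cast le_trans (by omega) this
    · exact pow_le_pow_of_le_one (by norm_num) (by norm_num) (by omega))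
  have hc : ∀ t l, i < t → l < S.N t → tc l e = (S.E t i).coeff l := by
    intro t l hit hl
    refine he l _ ?_
    filter_upwards [eventually_ge_atTop t] with s hs
    exact S.E_coeff_stable hit (by omega) hl
  have hlow : ∀ l ≤ S.N i, tc l e = if l = S.N i then 1 else 0 := fun l hl => by
    rw [hc (i + 1) l (by omega) (hl.trans_lt (S.N_strictMono (by omega))), S.E_diag_coeff hl]
  have hN : ∀ k, tc (S.N k) e = if k = i then 1 else 0 := by
    intro k
    rcases le_or_gt k i with hk | hk
    · rw [hlow _ (S.N_strictMono.monotone hk)]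
      simp only [S.N_strictMono.injective.eq_iff]
    · rw [if_neg hk.ne', hc (k + 1) _ (by omega) (S.N_strictMono (by omega)),
        S.E_succ_coeff hk le_rfl]
      exact (S.σ k).deg i _ le_rfl
  refine ⟨e, ⟨hd, fun t l hl => ?_⟩, hN⟩
  simp only [hN, ite_mul, one_mul, zero_mul, Finset.sum_ite_eq', Finset.mem_range]
  split_ifs with hit
  · exact hc t l hit hl
  · have := hl.trans_le (S.N_strictMono.monotone (not_lt.1 hit))
    rw [hlow l this.le, if_neg this.ne]

lemma M_infinite : ¬ FiniteDimensional ℂ S.M := by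
  intro hfin
  choose e he hN using S.exists_gen
  let φ : ℕ → S.M →ₗ[ℂ] ℂ := fun k =>
    { toFun := fun f => tc (S.N k) f
      map_add' := fun f g => tc_add _ f.2.1 g.2.1
      map_smul' := fun c f => tc_smul _ c _ }
  have hli : LinearIndependent ℂ (fun i => (⟨e i, he i⟩ : S.M)) := by
    rw [linearIndependent_iff']
    intro s g hg k hk
    have h1 := congrArg (φ k) hg
    rw [map_sum, map_zero] at h1
    have h2 : ∀ i, φ k (g i • (⟨e i, he i⟩ : S.M)) = if k = i then g i else 0 := fun i => by
      rw [map_smul]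
      change g i • tc (S.N k) (e i) = _
      rw [hN]; simp
    simp only [h2] at h1
    simpa [hk] using h1
  have := hli.finite_of_isNoetherian
  exact not_finite ℕ

end Sys

/-! ### Hypercyclicity of the elements of the subspace -/

lemma GoodOp.sum {a : ℂ} {L : ℕ → (ℂ → ℂ) → ℂ → ℂ} (hL : GoodOp a L) (m : ℕ) (s : Finset ℕ)
    (c : ℕ → ℂ) (p : ℕ → ℂ[X]) :
    L m (ev (∑ i ∈ s, c i • p i)) = ∑ i ∈ s, c i • L m (ev (p i)) := by
  induction s using Finset.induction_on with
  | empty =>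
    have := hL.smul m 0 0 (differentiable_const 0)
    rw [zero_smul, zero_smul] at this
    have h0 : ev 0 = 0 := by ext z; simp [ev]
    rw [Finset.sum_empty, Finset.sum_empty, h0]
    exact this
  | insert i s hi ih =>
    rw [Finset.sum_insert hi, Finset.sum_insert hi, ev_add, hL.add _ _ _ (ev_diff _) (ev_diff _),
      ih, ev_smul, hL.smul _ _ _ (ev_diff _)]

namespace Sys

variable {a : ℂ} {L : ℕ → ℕ → (ℂ → ℂ) → ℂ → ℂ} {tgt : ℕ → ℕ → ℂ[X]} (S : Sys a L tgt)

lemma tpoly_eq {f : ℂ → ℂ} (hf : f ∈ S.M) (t : ℕ) :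
    tpoly (S.N t) f = ∑ i ∈ Finset.range t, tc (S.N i) f • S.E t i := by
  ext l
  rw [tpoly_coeff, Polynomial.finsetSum_coeff]
  simp only [coeff_smul, smul_eq_mul]
  split_ifs with hl
  · exact hf.2 t l hl
  · refine (Finset.sum_eq_zero fun i _ => ?_).symm
    rw [show (S.E t i).coeff l = 0 from (S.σ t).deg i l (not_lt.1 hl), mul_zero]

/-- The block of `f ∈ M` between the degrees `N s` and `N (s + 1)` consists of the main term
`cₛ (z e^{-z/a})^{N s}` and of a term that is small on the disc of radius `R s`. -/
lemma block {f : ℂ → ℂ} (hf : f ∈ S.M) {B : ℝ}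
    (hB : ∀ k, ‖tc (S.N k) f‖ ≤ B * (1 / 2) ^ k) (hB0 : 0 ≤ B) (s : ℕ) :
    ∃ h : ℂ → ℂ, Differentiable ℂ h ∧ Bd (S.σ s).R h (3 * B * (S.σ s).δ) ∧
      ev (tpoly (S.N (s + 1)) f) = ev (tpoly (S.N s) f) + (tc (S.N s) f • ww a (S.N s) + h) := by
  set c : ℕ → ℂ := fun i => tc (S.N i) f with hc
  refine ⟨c s • (ev (S.step s).u - ww a (S.N s)) +
    ∑ i ∈ Finset.range (s + 1), c i • ev ((S.step s).q i), ?_, ?_, ?_⟩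
  · refine (((ev_diff _).sub (ww_diff _ _)).const_smul _).add ?_
    exact Differentiable.sum fun i _ => (ev_diff _).const_smul _
  · refine (((S.step s).u_bd.smul (c s)).add (Bd.sum _ fun i hi =>
      ((S.step s).q_bd i (Nat.lt_succ_iff.1 (Finset.mem_range.1 hi))).smul (c i))).mono le_rfl ?_
    have hδ := (S.σ s).δ_pos
    have h1 : ‖c s‖ ≤ B := (hB s).trans
      (mul_le_of_le_one_right hB0 (pow_le_one₀ (by norm_num) (by norm_num)))
    have h2 : ∑ i ∈ Finset.range (s + 1), ‖c i‖ ≤ B * 2 := by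
      refine (Finset.sum_le_sum fun i _ => hB i).trans ?_
      rw [← Finset.mul_sum]
      exact mul_le_mul_of_nonneg_left (sum_geometric_two_le _) hB0
    rw [← Finset.sum_mul, ← add_mul]
    exact mul_le_mul_of_nonneg_right (by linarith) hδ.le
  · rw [S.tpoly_eq hf, S.tpoly_eq hf, Finset.sum_range_succ]
    have h1 : S.E (s + 1) s = (S.step s).u + (S.step s).q s := (S.step s).E_eq
    have h2 : ∀ i ∈ Finset.range s, c i • S.E (s + 1) i =
        c i • S.E s i + c i • (S.step s).q i := fun i hi => by
      rw [← smul_add]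
      congr 1
      exact (S.step s).E_lt i (Finset.mem_range.1 hi)
    rw [Finset.sum_congr rfl h2, h1, Finset.sum_add_distrib, Finset.sum_range_succ]
    simp only [ev_add, ev_sum, ev_smul, smul_add, smul_sub]
    abel

/-- At time `t`, the operator `L t m` maps `f = ∑ cᵢ eᵢ` near `∑ cᵢ tgt t i`. -/
lemma main_estimate (hL : ∀ t, GoodOp a (L t)) {f : ℂ → ℂ} (hf : f ∈ S.M) (j : ℕ) :
    ∃ B : ℝ, ∀ t, j ≤ t → Bd j (L t (S.step t).m f -
      ∑ i ∈ Finset.range (t + 1), tc (S.N i) f • ev (tgt t i)) (B * (1 / 2) ^ t) := by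
  set c : ℕ → ℂ := fun i => tc (S.N i) f with hc
  have hK1 := KK_one_le a j
  obtain ⟨B, hB0, hB⟩ := exists_Bd hf.1 (2 * KK a j)
  have hle : ∀ k, k ≤ S.N k := fun k => S.N_strictMono.le_apply
  -- the coordinates decay faster than `KK a j ^ N k` grows
  have hcK : ∀ k, ‖c k‖ * KK a j ^ S.N k ≤ B * (1 / 2) ^ k := by
    intro k
    have h1 := tc_bound (S.N k) hf.1 (by linarith) hB
    rw [mul_pow, le_div_iff₀ (by positivity)] at h1
    have h2 : ‖c k‖ * KK a j ^ S.N k ≤ B * (1 / 2) ^ S.N k := by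
      rw [one_div, inv_pow, ← div_eq_mul_inv, le_div_iff₀ (by positivity)]
      linarith
    exact h2.trans (mul_le_mul_of_nonneg_left
      (pow_le_pow_of_le_one (by norm_num) (by norm_num) (hle k)) hB0)
  have hcB : ∀ k, ‖c k‖ ≤ B * (1 / 2) ^ k := fun k =>
    (le_mul_of_one_le_right (norm_nonneg _) (one_le_pow₀ hK1)).trans (hcK k)
  refine ⟨6 * B + 1, fun t hjt => ?_⟩
  have hjt' : (j : ℝ) ≤ t := by exact_mod_cast hjt
  set st := S.step t with hst
  set T : (ℂ → ℂ) → ℂ → ℂ := L t st.m with hT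
  set Φ : ℕ → ℂ → ℂ := fun s => ev (tpoly (S.N s) f) with hΦ
  have hΦd : ∀ s, Differentiable ℂ (Φ s) := fun s => ev_diff _
  obtain ⟨C, hC0, hCδ, hC⟩ := st.cont
  -- the blocks of `f` beyond time `t`
  have hblock : ∀ s, t + 1 ≤ s → Bd j (T (Φ (s + 1)) - T (Φ s)) (4 * B * (1 / 2) ^ s) := by
    intro s hs
    obtain ⟨h, hd, hbd, he⟩ := S.block hf hcB hB0 s
    have hw : Differentiable ℂ (tc (S.N s) f • ww a (S.N s)) := (ww_diff _ _).const_smul _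
    have e1 : T (Φ (s + 1)) - T (Φ s) = c s • T (ww a (S.N s)) + T h := by
      simp only [hΦ]
      rw [he]
      simp only [hT]
      rw [(hL t).add _ _ _ (ev_diff _) (hw.add hd), (hL t).add _ _ _ hw hd,
        (hL t).smul _ _ _ (ww_diff _ _), add_sub_cancel_left]
    rw [e1]
    have b1 := (st.growth (S.N s) (S.N_strictMono.monotone hs) j hjt).smul (c s)
    have b2 := hC h _ hd (hbd.mono (by exact_mod_cast S.R_strictMono.monotone hs) le_rfl)
    refine (b1.add (b2.mono hjt' le_rfl)).mono le_rfl ?_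
    have h3 : C * (S.σ s).δ ≤ (1 / 2) ^ s := by
      calc C * (S.σ s).δ ≤ C * ((S.σ (t + 1)).δ * (1 / 2) ^ (s - (t + 1))) :=
            mul_le_mul_of_nonneg_left (S.δ_le hs) hC0
        _ = C * (S.σ (t + 1)).δ * (1 / 2) ^ (s - (t + 1)) := by ring
        _ ≤ (1 / 2) ^ (t + 1) * (1 / 2) ^ (s - (t + 1)) :=
            mul_le_mul_of_nonneg_right hCδ (by positivity)
        _ = (1 / 2) ^ s := by rw [← pow_add]; congr 1; omega
    have h4 := hcK s
    have h5 := mul_le_mul_of_nonneg_left h3 (show 0 ≤ 3 * B by positivity)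
    nlinarith
  have htail : ∀ s, t + 1 ≤ s →
      Bd j (T (Φ s) - T (Φ (t + 1))) (8 * B * ((1 / 2) ^ (t + 1) - (1 / 2) ^ s)) := by
    intro s hs
    induction s, hs using Nat.le_induction with
    | base => intro z _; simp
    | succ s hs ih =>
      have := (hblock s hs).add ih
      rw [sub_add_sub_cancel] at this
      exact this.mono le_rfl (le_of_eq (by rw [pow_succ (1 / 2 : ℝ) s]; ring))
  -- continuity of `T` bounds the remainder of the Taylor series
  obtain ⟨C', hC'0, R', hC'⟩ := (hL t).cont st.m j
  obtain ⟨N₀, hN₀⟩ := taylor_unif hf.1 R' (δ := (1 / 2) ^ t / (C' + 1)) (by positivity)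
  set s := max N₀ (t + 1) with hs
  have hrem : Bd j (T (f - Φ s)) ((1 / 2) ^ t) := by
    refine (hC' _ _ (hf.1.sub (hΦd s)) (hN₀ (S.N s)
      ((le_max_left _ _).trans (hle s)))).mono le_rfl ?_
    have : (C' + 1) * ((1 / 2 : ℝ) ^ t / (C' + 1)) = (1 / 2) ^ t := by field_simp
    have h0 : (0 : ℝ) ≤ (1 / 2 : ℝ) ^ t / (C' + 1) := by positivity
    linarith
  -- the generators up to index `t` have been steered to their targets
  have hhead : Bd j (T (Φ (t + 1)) - ∑ i ∈ Finset.range (t + 1), c i • ev (tgt t i))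
      (2 * B * (1 / 2) ^ t) := by
    have e1 : T (Φ (t + 1)) - ∑ i ∈ Finset.range (t + 1), c i • ev (tgt t i) =
        ∑ i ∈ Finset.range (t + 1), c i • (T (ev (S.E (t + 1) i)) - ev (tgt t i)) := by
      simp only [hΦ, smul_sub, Finset.sum_sub_distrib]
      rw [S.tpoly_eq hf]
      simp only [hT]
      rw [(hL t).sum]
    rw [e1]
    refine (Bd.sum _ fun i hi => ((st.tgt_bd i
      (Nat.lt_succ_iff.1 (Finset.mem_range.1 hi))).mono hjt' le_rfl).smul (c i)).mono le_rfl ?_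
    rw [← Finset.sum_mul]
    refine mul_le_mul_of_nonneg_right ?_ (by positivity)
    refine (Finset.sum_le_sum fun i _ => hcB i).trans ?_
    rw [← Finset.mul_sum, mul_comm 2 B]
    exact mul_le_mul_of_nonneg_left (sum_geometric_two_le _) hB0
  have e2 : T f = T (f - Φ s) + T (Φ s) := by
    simp only [hT]
    rw [← (hL t).add _ _ _ (hf.1.sub (hΦd s)) (hΦd s), sub_add_cancel]
  have e3 : T f - ∑ i ∈ Finset.range (t + 1), c i • ev (tgt t i) = T (f - Φ s) +
      ((T (Φ s) - T (Φ (t + 1))) +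
        (T (Φ (t + 1)) - ∑ i ∈ Finset.range (t + 1), c i • ev (tgt t i))) := by
    rw [e2]; abel
  rw [e3]
  refine (hrem.add ((htail s (le_max_right _ _)).add hhead)).mono le_rfl ?_
  have h6 : (0 : ℝ) ≤ 8 * B * (1 / 2) ^ s := by positivity
  rw [pow_succ]
  nlinarith

end Sys

/-- Every element of a countable set of tasks can be scheduled infinitely often. -/
lemma exists_schedule : ∃ τ : ℕ → Bool × ℕ × ℕ, ∀ x t₀, ∃ t ≥ t₀, τ t = x := by
  obtain ⟨τ, hτ⟩ := exists_surjective_nat ((Bool × ℕ × ℕ) × ℕ)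
  refine ⟨fun t => (τ t).1, fun x t₀ => ?_⟩
  by_contra! h
  have hsub : Set.range (fun n : ℕ => (x, n)) ⊆ τ '' Set.Iio t₀ := by
    rintro _ ⟨n, rfl⟩
    obtain ⟨t, ht⟩ := hτ (x, n)
    refine ⟨t, ?_, ht⟩
    by_contra hlt
    exact h t (not_lt.1 hlt) (by rw [ht])
  exact Set.infinite_range_of_injective (fun m n h => (Prod.mk.inj h).2)
    (((Set.finite_Iio t₀).image τ).subset hsub)

/-- Two operators with the properties `GoodOp`, indexed by `Bool`, have a common hypercyclic
subspace. -/
lemma exists_common {a : ℂ} (L : Bool → ℕ → (ℂ → ℂ) → ℂ → ℂ) (hL : ∀ b, GoodOp a (L b)) :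
    ∃ M : Submodule ℂ (ℂ → ℂ), IsClosedInfDimSubspaceH M ∧
      ∀ f ∈ M, f ≠ 0 → ∀ b, ∀ g : ℂ → ℂ, Differentiable ℂ g → ∀ j : ℕ, ∀ ε : ℝ, 0 < ε →
        ∃ m, Bd j (L b m f - g) ε := by
  obtain ⟨G, hG⟩ := exists_dense_polys
  obtain ⟨τ, hτ⟩ := exists_schedule
  -- the task `(b, k, l)`: `L b` should map the `k`-th generator near `G l`, the others near `0`
  obtain ⟨S⟩ := exists_sys (fun t => hL (τ t).1)
    (fun t i => if i = (τ t).2.1 then G (τ t).2.2 else 0)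
  refine ⟨S.M, ⟨fun f hf => hf.1, S.M_closed, S.M_infinite⟩, fun f hf hf0 b g hg j ε hε => ?_⟩
  obtain ⟨k, hk⟩ : ∃ k, tc (S.N k) f ≠ 0 := by
    by_contra! h
    refine hf0 (eq_zero_of_tc hf.1 fun l => ?_)
    rw [hf.2 (l + 1) l (S.N_strictMono.le_apply (x := l + 1))]
    simp [h]
  set γ := tc (S.N k) f with hγ
  have hγ0 : 0 < ‖γ‖ := norm_pos_iff.2 hk
  obtain ⟨l, hl⟩ := hG (γ⁻¹ • g) (hg.const_smul _) j (ε / 2 / ‖γ‖) (by positivity)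
  obtain ⟨B, hB⟩ := S.main_estimate (fun t => hL (τ t).1) hf j
  have ht0 : Tendsto (fun t : ℕ => B * (1 / 2 : ℝ) ^ t) atTop (𝓝 0) := by
    simpa using (tendsto_pow_atTop_nhds_zero_of_lt_one (r := (1 / 2 : ℝ)) (by norm_num)
      (by norm_num)).const_mul B
  obtain ⟨t₁, ht₁⟩ := eventually_atTop.1 (ht0.eventually_le_const (half_pos hε))
  obtain ⟨t, ht, hτt⟩ := hτ (b, k, l) (max t₁ (max j k))
  have h1 : t₁ ≤ t := (le_max_left _ _).trans ht
  have h2 : j ≤ t := ((le_max_left _ _).trans (le_max_right _ _)).trans ht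
  have h3 : k ≤ t := ((le_max_right _ _).trans (le_max_right _ _)).trans ht
  have key := (hB t h2).mono le_rfl (ht₁ t h1)
  have hsum : ∑ i ∈ Finset.range (t + 1), tc (S.N i) f •
      ev (if i = (τ t).2.1 then G (τ t).2.2 else 0) = γ • ev (G l) := by
    rw [hτt]
    rw [Finset.sum_eq_single_of_mem k (Finset.mem_range.2 (by omega))]
    · simp [hγ]
    · intro i _ hik
      ext z; simp [hik, ev]
  have hL' : ∀ n, L (τ t).1 n f = L b n f := fun n => by rw [hτt]
  rw [hsum, hL'] at key
  refine ⟨(S.step t).m, ?_⟩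
  have e : L b (S.step t).m f - g = (L b (S.step t).m f - γ • ev (G l)) +
      (-γ) • (γ⁻¹ • g - ev (G l)) := by
    rw [neg_smul, smul_sub, smul_inv_smul₀ hk]; abel
  rw [e]
  refine (key.add (hl.smul (-γ))).mono le_rfl ?_
  rw [norm_neg, mul_div_cancel₀ _ hγ0.ne']
  linarith

end Helpers

/-- For `μ ≠ 0` and `a ≠ 0`, the operators `μD` and `T_a` possess a common
hypercyclic subspace. -/
theorem stmt_1 (μ a : ℂ) (hμ : μ ≠ 0) (ha : a ≠ 0) :
    ∃ M : Submodule ℂ (ℂ → ℂ), IsClosedInfDimSubspaceH M ∧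
      ∀ f ∈ M, f ≠ 0 →
        HypercyclicFor (derivOp μ) f ∧ HypercyclicFor (translOp a) f := by
  obtain ⟨M, hM, h⟩ := exists_common (a := a)
    (fun b m => (bif b then derivOp μ else translOp a)^[m]) (by
      rintro (_ | _)
      · exact goodOp_transl ha
      · exact goodOp_deriv a hμ)
  refine ⟨M, hM, fun f hf hf0 => ⟨fun g hg j _ ε hε => ?_, fun g hg j _ ε hε => ?_⟩⟩
  · obtain ⟨m, hm⟩ := h f hf hf0 true g hg j (ε / 2) (half_pos hε)
    exact ⟨m, pnorm_lt j.cast_nonneg hm (half_lt_self hε)⟩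
  · obtain ⟨m, hm⟩ := h f hf hf0 false g hg j (ε / 2) (half_pos hε)
    exact ⟨m, pnorm_lt j.cast_nonneg hm (half_lt_self hε)⟩
end

section
/- Let a ∈ ℂ∖{0}. For every j ≥ 1 there exists N ≥ 0 such that for every n ≥ N, every ε > 0, and every entire function f, there exists a polynomial P satisfying p_j(P) < ε and p_j(T_aⁿ(P + f)) < ε, i.e., sup_{|z|≤j} |P(z)| < ε and sup_{|z|≤j} |P(z + na) + f(z + na)| < ε. -/
/-!
For `b = n a` far from the origin, the polynomial `-Q R` works, where `R` is a Taylor section of `f`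
close to `f` on a large disc (`exists_poly_approx`) and `Q` is a polynomial that is nearly `0` on
`|z| ≤ j` and nearly `1` on `|z - b| ≤ j` (`exists_poly_separating`). Indeed `-Q R` is small on the
first disc, while on the second `f - Q R = (f - R) + (1 - Q) R` is small.

Runge's theorem would provide `Q`, but since `|b|` may be taken large compared with `j`, `Q` can be
given explicitly: `z ↦ z / b` sends the two discs into small discs about `0` and `1`, and these
points are attracting fixed points of `w ↦ 3w² - 2w³`, so that a high iterate of this polynomial,
applied to `z / b`, has the required property.
-/

open Filter Metric Set

/-- Entire functions are uniformly approximated by polynomials (their Taylor sections) on discs. -/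
lemma exists_poly_approx {f : ℂ → ℂ} (hf : Differentiable ℂ f) (r : NNReal) {ε : ℝ} (hε : 0 < ε) :
    ∃ R : Polynomial ℂ, ∀ z : ℂ, ‖z‖ < r → ‖f z - R.eval z‖ < ε := by
  have h := (hf.hasFPowerSeriesOnBall 0 (R := 1) one_pos).tendstoUniformlyOn
    (r' := r) ENNReal.coe_lt_top
  rw [Metric.tendstoUniformlyOn_iff] at h
  obtain ⟨n, hn⟩ := (h ε hε).exists
  refine ⟨∑ k ∈ Finset.range n,
    Polynomial.C ((cauchyPowerSeries f 0 (1 : NNReal)).coeff k) * Polynomial.X ^ k, fun z hz => ?_⟩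
  have h2 := hn z (by simpa using hz)
  rw [dist_eq_norm, zero_add] at h2
  have h3 : Polynomial.eval z (∑ k ∈ Finset.range n,
      Polynomial.C ((cauchyPowerSeries f 0 (1 : NNReal)).coeff k) * Polynomial.X ^ k) =
      (cauchyPowerSeries f 0 (1 : NNReal)).partialSum n z := by
    simp only [FormalMultilinearSeries.partialSum, Polynomial.eval_finsetSum, Polynomial.eval_mul,
      Polynomial.eval_C, Polynomial.eval_pow, Polynomial.eval_X,
      FormalMultilinearSeries.apply_eq_pow_smul_coeff, smul_eq_mul, mul_comm]
  rwa [h3]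

/-- The polynomial `3X² - 2X³`: it commutes with `w ↦ 1 - w` and has super-attracting fixed points
at `0` and `1`. -/
noncomputable def smoothStep : Polynomial ℂ :=
  3 * Polynomial.X ^ 2 - 2 * Polynomial.X ^ 3

lemma eval_smoothStep (w : ℂ) : smoothStep.eval w = 3 * w ^ 2 - 2 * w ^ 3 := by
  simp [smoothStep]

lemma norm_smoothStep_le {w : ℂ} (hw : ‖w‖ ≤ 1 / 8) : ‖smoothStep.eval w‖ ≤ ‖w‖ / 2 := by
  rw [eval_smoothStep, show 3 * w ^ 2 - 2 * w ^ 3 = w * (w * (3 - 2 * w)) by ring,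
    norm_mul, norm_mul]
  have h : ‖3 - 2 * w‖ ≤ 4 := by
    refine (norm_sub_le _ _).trans ?_
    rw [norm_mul, Complex.norm_ofNat, Complex.norm_ofNat]
    linarith
  have h2 : ‖w‖ * ‖3 - 2 * w‖ ≤ 1 / 2 := by
    calc ‖w‖ * ‖3 - 2 * w‖ ≤ 1 / 8 * 4 := by gcongr
      _ = 1 / 2 := by norm_num
  nlinarith [norm_nonneg w]

lemma norm_iterate_smoothStep_le {w : ℂ} (hw : ‖w‖ ≤ 1 / 8) (k : ℕ) :
    ‖(fun x => smoothStep.eval x)^[k] w‖ ≤ (1 / 2) ^ k * ‖w‖ := by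
  induction k with
  | zero => simp
  | succ k ih =>
    rw [Function.iterate_succ_apply']
    have h1 : (1 / 2 : ℝ) ^ k ≤ 1 := pow_le_one₀ (by norm_num) (by norm_num)
    refine (norm_smoothStep_le (ih.trans ?_)).trans ?_
    · nlinarith [norm_nonneg w]
    · rw [pow_succ]; linarith

lemma one_sub_iterate_smoothStep (w : ℂ) (k : ℕ) :
    1 - (fun x => smoothStep.eval x)^[k] w = (fun x => smoothStep.eval x)^[k] (1 - w) := by
  induction k with
  | zero => simp
  | succ k ih =>
    rw [Function.iterate_succ_apply', Function.iterate_succ_apply', ← ih]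
    simp only [eval_smoothStep]
    ring

/-- Polynomials can simultaneously be close to `0` on the disc of radius `j` about `0` and close
to `1` on the disc of radius `j` about `b`, once these discs are far apart. -/
lemma exists_poly_separating {j : ℝ} {b : ℂ} (hj : 0 < j) (hb : 8 * j ≤ ‖b‖) {δ : ℝ}
    (hδ : 0 < δ) :
    ∃ Q : Polynomial ℂ, (∀ z : ℂ, ‖z‖ ≤ j → ‖Q.eval z‖ ≤ δ) ∧
      ∀ z : ℂ, ‖z‖ ≤ j → ‖1 - Q.eval (z + b)‖ ≤ δ := by
  obtain ⟨k, hk⟩ := exists_pow_lt_of_lt_one hδ (show (1 / 2 : ℝ) < 1 by norm_num)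
  have hb0 : 0 < ‖b‖ := by linarith
  have hbne : b ≠ 0 := norm_pos_iff.1 hb0
  have small : ∀ w : ℂ, ‖w‖ ≤ 1 / 8 → ‖(fun x => smoothStep.eval x)^[k] w‖ ≤ δ := fun w hw => by
    have h1 : (0 : ℝ) < (1 / 2) ^ k := by positivity
    refine (norm_iterate_smoothStep_le hw k).trans ?_
    nlinarith
  have hdiv : ∀ z : ℂ, ‖z‖ ≤ j → ‖b⁻¹ * z‖ ≤ 1 / 8 := fun z hz => by
    rw [norm_mul, norm_inv, inv_mul_le_iff₀ hb0]
    linarith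
  refine ⟨smoothStep.comp^[k] (Polynomial.C b⁻¹ * Polynomial.X), fun z hz => ?_, fun z hz => ?_⟩
  · rw [Polynomial.iterate_comp_eval]
    simpa using small _ (hdiv z hz)
  · rw [Polynomial.iterate_comp_eval, one_sub_iterate_smoothStep]
    refine small _ ?_
    have : 1 - (Polynomial.C b⁻¹ * Polynomial.X).eval (z + b) = -(b⁻¹ * z) := by
      simp [mul_add, hbne]
    rw [this, norm_neg]
    exact hdiv z hz

lemma pnorm_le {j : ℝ} (hj : 0 ≤ j) {g : ℂ → ℂ} {c : ℝ} (h : ∀ z : ℂ, ‖z‖ ≤ j → ‖g z‖ ≤ c) :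
    pnorm j g ≤ c := by
  refine csSup_le ((Metric.nonempty_closedBall.2 hj).image _) ?_
  rintro _ ⟨z, hz, rfl⟩
  exact h z (by simpa using hz)

/-- Lemma 2.3: for every `j ≥ 1` there is `N` such that for all `n ≥ N`, `ε > 0`
and entire `f`, there is a polynomial `P` with `p_j(P) < ε` and
`p_j(T_aⁿ(P + f)) < ε`. -/
theorem stmt_2 (a : ℂ) (ha : a ≠ 0) :
    ∀ j : ℕ, 1 ≤ j → ∃ N : ℕ, ∀ n : ℕ, N ≤ n → ∀ ε : ℝ, 0 < ε →
      ∀ f : ℂ → ℂ, Differentiable ℂ f →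
        ∃ P : Polynomial ℂ,
          pnorm j (fun z => P.eval z) < ε ∧
          pnorm j (fun z => P.eval (z + (n : ℂ) * a) + f (z + (n : ℂ) * a)) < ε := by
  intro j hj
  have hj0 : (0 : ℝ) < j := by exact_mod_cast hj
  have ha0 : 0 < ‖a‖ := norm_pos_iff.2 ha
  obtain ⟨N, hN⟩ := exists_nat_ge (8 * j / ‖a‖)
  refine ⟨N, fun n hn ε hε f hf => ?_⟩
  set b : ℂ := (n : ℂ) * a with hb_def
  have hb : 8 * (j : ℝ) ≤ ‖b‖ := by
    rw [hb_def, norm_mul, Complex.norm_natCast]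
    rw [div_le_iff₀ ha0] at hN
    exact hN.trans (by gcongr)
  obtain ⟨R, hR⟩ := exists_poly_approx hf ((j : NNReal) + ‖b‖₊ + 1) (ε := ε / 4) (by positivity)
  obtain ⟨M, hM⟩ := (isCompact_closedBall (0 : ℂ) (j + ‖b‖)).exists_bound_of_continuousOn
    R.continuous.continuousOn
  have hM0 : 0 ≤ M := (norm_nonneg _).trans (hM 0 (by simp; positivity))
  obtain ⟨Q, hQ0, hQ1⟩ := exists_poly_separating hj0 hb
    (δ := ε / (4 * (M + 1))) (by positivity)
  have hδM : ε / (4 * (M + 1)) * M ≤ ε / 4 := by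
    rw [div_mul_eq_mul_div, div_le_div_iff₀ (by positivity) (by norm_num)]
    nlinarith
  refine ⟨-(Q * R), ?_, ?_⟩
  · refine (pnorm_le (c := ε / 4) hj0.le fun z hz => ?_).trans_lt (by linarith)
    rw [Polynomial.eval_neg, Polynomial.eval_mul, norm_neg, norm_mul]
    have := hM z (by simpa using hz.trans (by linarith [norm_nonneg b]))
    exact (mul_le_mul (hQ0 z hz) this (norm_nonneg _) (by positivity)).trans hδM
  · refine (pnorm_le (c := ε / 2) hj0.le fun z hz => ?_).trans_lt (by linarith)
    have hzb : ‖z + b‖ ≤ j + ‖b‖ := (norm_add_le _ _).trans (by linarith)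
    have h1 := hR (z + b) (by push_cast; linarith)
    have h2 := hM (z + b) (by simpa using hzb)
    have h3 := (mul_le_mul (hQ1 z hz) h2 (norm_nonneg _) (by positivity)).trans hδM
    rw [← norm_mul] at h3
    have : (-(Q * R)).eval (z + b) + f (z + b) =
        (f (z + b) - R.eval (z + b)) + (1 - Q.eval (z + b)) * R.eval (z + b) := by
      rw [Polynomial.eval_neg, Polynomial.eval_mul]; ring
    rw [this]
    refine (norm_add_le _ _).trans ?_
    linarith
end

section
/- Let a ∈ ℂ∖{0} and let (m_k)_{k≥1} be a strictly increasing sequence of positive integers such that m₁|a| > 2 and such that the closed disks D(−m_j a, j) and D(−m_k a, k) are disjoint for every j ≠ k. Then for every k ≥ 1, every ε > 0 and every integer d ≥ 0, there exists a polynomial P such that val(P) ≥ d, p₁(P) ≥ 1/2, and p_j(T_a^{m_j} P) < ε for every j ≤ k (i.e., sup_{|z|≤j} |P(z + m_j a)| < ε for every 1 ≤ j ≤ k). -/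
/-!
The bounds on `P(z + m_j a)` for `|z| ≤ j` concern the values of `P` on `D(m_j a, j)`. No general
approximation theorem is needed: there are a point `u` of the closed unit disk and a single disk,
centred at `c = m_k a`, which contains every `D(m_j a, j)`, `1 ≤ j ≤ k`, and misses `u`.

Take `u = a/|a|` and `t = m_k |a| = |c|`, so that `|u - c| = t - 1`. Disjointness of
`D(-m_1 a, 1)` and `D(-m_j a, j)` gives `m_j |a| - j ≥ m_1 |a| - 1` for all `j ≥ 1` (`gap_le`),
so every `z` in `D(m_j a, j)` satisfies `|z - c| ≤ j + (m_k - m_j) |a| ≤ t - (m_1 |a| - 1)`.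
This is smaller than `t - 1` because `m_1 |a| > 2`. Therefore
`P(z) = z ^ d ((z - c) / (u - c)) ^ n` has `|P(u)| = 1`, and tends to `0` uniformly on all the
disks as `n → ∞`.
-/

open Filter Metric Set

lemma le_pnorm_of_continuous {f : ℂ → ℂ} (hf : Continuous f) {r : ℝ} {z : ℂ} (hz : ‖z‖ ≤ r) :
    ‖f z‖ ≤ pnorm r f := by
  refine le_csSup ?_ ⟨z, by simpa using hz, rfl⟩
  exact ((isCompact_closedBall (0 : ℂ) r).image hf.norm).bddAbove

lemma pnorm_le_of_forall {f : ℂ → ℂ} {r b : ℝ} (hr : 0 ≤ r) (h : ∀ z, ‖z‖ ≤ r → ‖f z‖ ≤ b) :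
    pnorm r f ≤ b := by
  refine csSup_le ⟨_, 0, by simpa using hr, rfl⟩ ?_
  rintro _ ⟨z, hz, rfl⟩
  exact h z (by simpa using hz)

/-- The gap between the unit disk and `D(-m_j a, j)` is smallest for `j = 1`. -/
lemma gap_le (a : ℂ) (m : ℕ → ℕ) (hmono : StrictMono m)
    (hdisj : ∀ j k : ℕ, 1 ≤ j → 1 ≤ k → j ≠ k →
      Disjoint (Metric.closedBall (-((m j : ℂ) * a)) (j : ℝ))
        (Metric.closedBall (-((m k : ℂ) * a)) (k : ℝ)))
    (j : ℕ) (hj : 1 ≤ j) : (m 1 : ℝ) * ‖a‖ - 1 ≤ m j * ‖a‖ - j := by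
  rcases hj.eq_or_lt with rfl | hlt
  · simp
  have h := (disjoint_closedBall_closedBall_iff (by positivity) (by positivity)).1
    (hdisj 1 j le_rfl hj hlt.ne)
  have hm : (m 1 : ℝ) ≤ m j := by exact_mod_cast hmono.monotone hj
  have hd : dist (-((m 1 : ℂ) * a)) (-((m j : ℂ) * a)) = (m j - m 1) * ‖a‖ := by
    rw [dist_eq_norm, show -((m 1 : ℂ) * a) - -((m j : ℂ) * a)
      = (((m j - m 1 : ℝ)) : ℂ) * a by push_cast; ring, norm_mul, Complex.norm_real,
      Real.norm_of_nonneg (by linarith)]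
  rw [hd] at h
  push_cast at h
  linarith

/-- Lemma 2.6: given a strictly increasing sequence `(m_k)` of positive integers with
`m₁|a| > 2` and pairwise disjoint disks `D(-m_j a, j)`, for every `k ≥ 1`, `ε > 0` and
`d ≥ 0` there is a polynomial `P` with `val(P) ≥ d`, `p₁(P) ≥ 1/2` and
`p_j(T_a^{m_j} P) < ε` for every `1 ≤ j ≤ k`. -/
theorem stmt_4 (a : ℂ) (ha : a ≠ 0) (m : ℕ → ℕ)
    (hmono : StrictMono m) (hpos : ∀ k, 1 ≤ k → 1 ≤ m k)
    (hm1 : 2 < (m 1 : ℝ) * ‖a‖)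
    (hdisj : ∀ j k : ℕ, 1 ≤ j → 1 ≤ k → j ≠ k →
      Disjoint (Metric.closedBall (-((m j : ℂ) * a)) (j : ℝ))
        (Metric.closedBall (-((m k : ℂ) * a)) (k : ℝ))) :
    ∀ k : ℕ, 1 ≤ k → ∀ ε : ℝ, 0 < ε → ∀ d : ℕ,
      ∃ P : Polynomial ℂ,
        d ≤ P.natTrailingDegree ∧
        (1 : ℝ) / 2 ≤ pnorm 1 (fun z => P.eval z) ∧
        ∀ j : ℕ, 1 ≤ j → j ≤ k →
          pnorm j (fun z => P.eval (z + (m j : ℂ) * a)) < ε := by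
  intro k hk ε hε d
  set t : ℝ := m k * ‖a‖ with ht
  have ha' : 0 < ‖a‖ := norm_pos_iff.2 ha
  have hmle : ∀ j, j ≤ k → (m j : ℝ) * ‖a‖ ≤ t := fun j hj => by
    have : (m j : ℝ) ≤ m k := by exact_mod_cast hmono.monotone hj
    exact mul_le_mul_of_nonneg_right this ha'.le
  have ht1 : 1 < t := by linarith [hmle 1 hk]
  set c : ℂ := (m k : ℂ) * a with hc
  set u : ℂ := a / ‖a‖ with hu
  have hu1 : ‖u‖ = 1 := by simp [hu, ha'.ne']
  have huc : ‖u - c‖ = t - 1 := by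
    have hne : (‖a‖ : ℂ) ≠ 0 := by exact_mod_cast ha'.ne'
    have h1 : u - c = -(((t - 1 : ℝ) : ℂ) * (a / ‖a‖)) := by
      simp only [hu, hc, ht]
      push_cast
      field_simp
      ring
    rw [h1, norm_neg, norm_mul, Complex.norm_real, Real.norm_of_nonneg (by linarith)]
    simp [ha'.ne']
  have huc0 : u - c ≠ 0 := norm_pos_iff.1 (by linarith)
  set q : ℝ := (t - (m 1 * ‖a‖ - 1)) / (t - 1) with hq
  have hq0 : 0 ≤ q := div_nonneg (by linarith [hmle 1 hk]) (by linarith)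
  have hq1 : q < 1 := (div_lt_one (by linarith)).2 (by linarith)
  -- Powers of `q` beat the factor `(t + k) ^ d` that bounds `z ^ d` on the disks.
  obtain ⟨n, hn⟩ : ∃ n : ℕ, (t + k) ^ d * q ^ n < ε := by
    have h := (tendsto_pow_atTop_nhds_zero_of_lt_one hq0 hq1).const_mul ((t + k) ^ d)
    rw [mul_zero] at h
    exact (h.eventually_lt_const hε).exists
  let P : Polynomial ℂ := Polynomial.X ^ d *
    (Polynomial.C (u - c)⁻¹ * (Polynomial.X - Polynomial.C c)) ^ n
  have hev : ∀ z, P.eval z = z ^ d * ((u - c)⁻¹ * (z - c)) ^ n := fun z => by simp [P]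
  have hPu : ‖P.eval u‖ = 1 := by
    rw [hev, inv_mul_cancel₀ huc0]
    simp [hu1]
  have hP0 : P ≠ 0 := fun h => by simp [h] at hPu
  refine ⟨P, ?_, ?_, ?_⟩
  · exact Polynomial.le_natTrailingDegree hP0 fun i hi =>
      Polynomial.X_pow_dvd_iff.1 (Dvd.intro _ rfl) i hi
  · have := le_pnorm_of_continuous P.continuous hu1.le
    linarith
  · intro j hj hjk
    refine (pnorm_le_of_forall (Nat.cast_nonneg j) fun z hz => ?_).trans_lt hn
    have hgap := gap_le a m hmono hdisj j hj
    have hjk' : (j : ℝ) ≤ k := by exact_mod_cast hjk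
    have hnorm : ∀ r : ℝ, 0 ≤ r → ‖(r : ℂ) * a‖ = r * ‖a‖ := fun r hr => by
      rw [norm_mul, Complex.norm_real, Real.norm_of_nonneg hr]
    have h1 : ‖z + (m j : ℂ) * a‖ ≤ t + k := by
      refine (norm_add_le _ _).trans ?_
      have := hnorm (m j) (by positivity)
      push_cast at this
      linarith [hmle j hjk]
    have h2 : ‖z + (m j : ℂ) * a - c‖ ≤ t - (m 1 * ‖a‖ - 1) := by
      have hm : (m j : ℝ) ≤ m k := by exact_mod_cast hmono.monotone hjk
      have := hnorm (m k - m j) (by linarith)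
      rw [show z + (m j : ℂ) * a - c = z - ((m k - m j : ℝ) : ℂ) * a by
        rw [hc]; push_cast; ring]
      refine (norm_sub_le _ _).trans ?_
      rw [this]
      linarith
    have h3 : ‖(u - c)⁻¹ * (z + (m j : ℂ) * a - c)‖ ≤ q := by
      rw [norm_mul, norm_inv, huc, hq, div_eq_inv_mul]
      exact mul_le_mul_of_nonneg_left h2 (inv_nonneg.2 (by linarith))
    rw [hev, norm_mul, norm_pow, norm_pow]
    gcongr
end

section
/- Let φ : ℕ → ℕ be a map and let (m_k) and (t_k) be two strictly increasing sequences of positive integers. For every θ ∈ (0, π), every j ≥ 1 and every K ≥ 0, there exist k₁, k₂ ≥ K such that for every ε > 0, every b > 0 and every entire function f, there exists a polynomial P satisfying: (1) p_j(P) < ε; (2) for every a ∈ 𝕋 with a ∉ {e^{iα} : α ∈ (−θ, θ)} and every k ∈ [m_{k₁}, m_{k₁} + φ(m_{k₁})], p_j(e^{bk} T_a^k (P + f)) < ε; (3) for every k ∈ [t_{k₂}, t_{k₂} + φ(t_{k₂})], p_j(e^{bk} T_1^k (P + f)) < ε. -/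
/-!
The translated discs in the statement lie in three compact sets: the central disc `|z| ≤ j`, a
piece of an annular sector avoiding the positive real axis (`sector`), and discs centred far out on
that axis (`discs`). It suffices to find a polynomial that is small on the first set and nearly
equal to `-f` on the other two. For `k₁` and then `k₂` large, an unbounded connected set, the
`keyhole`, misses all three sets and contains a circle around the central disc
(`disjoint_keyhole`).

On the union `K` of the three sets, `ρ ^ n / (ρ ^ n - z ^ n)` is, for large `n`, nearly `1` inside
the circle `|z| = ρ` and nearly `0` outside. Its poles lie on the keyhole, so it is a uniform limit
of polynomials on `K`: relative to the Banach algebra of such limits, the spectrum of the coordinate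
function consists of `K` and of bounded components of its complement, hence misses the keyhole
(`notMem_spectrum_closure_polynomials`), and spectral mapping for `z ↦ z ^ n` makes `ρ ^ n - z ^ n`
invertible there. This gives a polynomial `Q` close to the indicator function of the disc
(`exists_polynomial_near_indicator`), and with `T` a Taylor polynomial of `f`, the polynomial
`T * (Q - 1)` is the one sought (`exists_polynomial_small_and_cancel`). The finitely many factors
`exp (b * k)` are bounded, so they only change the required accuracy.
-/

open Filter Metric Set

/-! ### Polynomial approximation on compact sets -/

/-- A bound on the closed disc of radius `j` bounds the seminorm `pnorm j`. -/
lemma pnorm_le_of_bound (j : ℕ) {g : ℂ → ℂ} {c : ℝ} (h : ∀ z : ℂ, ‖z‖ ≤ j → ‖g z‖ ≤ c) :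
    pnorm j g ≤ c := by
  unfold pnorm
  refine csSup_le ⟨_, 0, by simp, rfl⟩ ?_
  rintro _ ⟨z, hz, rfl⟩
  exact h z (by simpa using hz)

/-- Entire functions are uniformly approximated by polynomials on compact sets
(the partial sums of the Taylor series at `0`). -/
lemma exists_polynomial_near_entire {f : ℂ → ℂ} (hf : Differentiable ℂ f) {K : Set ℂ}
    (hK : IsCompact K) {ε : ℝ} (hε : 0 < ε) :
    ∃ T : Polynomial ℂ, ∀ z ∈ K, ‖f z - T.eval z‖ < ε := by
  obtain ⟨R, hR0, hR⟩ := hK.isBounded.subset_ball_lt 0 0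
  lift R to NNReal using hR0.le
  have hp := hf.hasFPowerSeriesOnBall 0 (R := 1) one_pos
  have hu := hp.tendstoUniformlyOn (r' := R) (by simp)
  obtain ⟨n, hn⟩ := (Metric.tendstoUniformlyOn_iff.1 hu ε hε).exists
  refine ⟨∑ i ∈ Finset.range n, Polynomial.C ((cauchyPowerSeries f 0 1).coeff i) *
    Polynomial.X ^ i, fun z hz => ?_⟩
  have h := hn z (hR hz)
  rw [zero_add, dist_eq_norm] at h
  have hT : (cauchyPowerSeries f 0 1).partialSum n z = (∑ i ∈ Finset.range n,
      Polynomial.C ((cauchyPowerSeries f 0 1).coeff i) * Polynomial.X ^ i).eval z := by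
    rw [FormalMultilinearSeries.partialSum, Polynomial.eval_finsetSum]
    refine Finset.sum_congr rfl fun i _ => ?_
    rw [FormalMultilinearSeries.apply_eq_pow_smul_coeff]
    simp only [Polynomial.eval_mul, Polynomial.eval_C, Polynomial.eval_pow, Polynomial.eval_X,
      smul_eq_mul, mul_comm]
  rwa [← hT]

/-- As `v / (1 - v)` equals both `1 / (1 - v) - 1` and, for `v ≠ 0`, `-1 / (1 - v⁻¹)`, this says
that `1 / (1 - w)` is near `1` for `w` small and near `0` for `w` large. -/
lemma norm_geom_le {v : ℂ} {δ : ℝ} (hδ : δ ≤ 1 / 2) (hv : ‖v‖ ≤ δ) :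
    ‖v / (1 - v)‖ ≤ 2 * δ := by
  have h1 : 1 / 2 ≤ ‖1 - v‖ := by
    have := norm_sub_norm_le (1 : ℂ) v
    rw [norm_one] at this
    linarith
  rw [norm_div, div_le_iff₀ (by linarith)]
  nlinarith [norm_nonneg v]

/-- Pole pushing: if an unbounded connected set `Γ` misses the compact set `K`, then no point of
`Γ` is in the spectrum of the coordinate function relative to the uniform closure of the
polynomials on `K`, since that spectrum only adds bounded components of the complement to `K`. -/
lemma notMem_spectrum_closure_polynomials {K Γ : Set ℂ} [CompactSpace K]
    (hΓ : IsPreconnected Γ) (hub : ¬ Bornology.IsBounded Γ) (hd : Disjoint Γ K)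
    (x : (polynomialFunctions K).topologicalClosure)
    (hx : (x : C(K, ℂ)) = Polynomial.X.toContinuousMapOn K) {w : ℂ} (hw : w ∈ Γ) :
    w ∉ spectrum ℂ x := by
  intro hws
  have hcl : IsClosed ((polynomialFunctions K).topologicalClosure : Set C(K, ℂ)) :=
    (polynomialFunctions K).isClosed_topologicalClosure
  refine hub ((Subalgebra.spectrum_isBounded_connectedComponentIn _ _ hws).subset
    (hΓ.subset_connectedComponentIn hw ?_))
  rw [hx, ContinuousMap.spectrum_eq_range]
  rintro y hyΓ ⟨k, rfl⟩
  exact Set.disjoint_left.1 hd hyΓ (by simp)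

/-- Runge-type separation of the part of `K` inside the disc of radius `ρ` from the part outside:
the function `ρ ^ n / (ρ ^ n - z ^ n)`, all of whose poles lie on the circle `|z| = ρ`, is close to
`1` inside and to `0` outside when `n` is large, and is a uniform limit of polynomials on `K`. -/
lemma exists_polynomial_near_indicator {K Γ : Set ℂ} (hK : IsCompact K)
    (hΓ : IsPreconnected Γ) (hub : ¬ Bornology.IsBounded Γ) (hd : Disjoint Γ K)
    {r ρ R : ℝ} (hr : 0 ≤ r) (hrρ : r < ρ) (hρR : ρ < R) (hs : Metric.sphere (0 : ℂ) ρ ⊆ Γ)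
    {ε : ℝ} (hε : 0 < ε) :
    ∃ Q : Polynomial ℂ, (∀ z ∈ K, ‖z‖ ≤ r → ‖Q.eval z - 1‖ ≤ ε) ∧
      (∀ z ∈ K, R ≤ ‖z‖ → ‖Q.eval z‖ ≤ ε) := by
  have : CompactSpace K := isCompact_iff_compactSpace.1 hK
  have hρ : 0 < ρ := by linarith
  have hρc : (ρ : ℂ) ≠ 0 := by exact_mod_cast hρ.ne'
  set S := (polynomialFunctions K).topologicalClosure with hS
  let x : S := ⟨Polynomial.X.toContinuousMapOn K,
    (polynomialFunctions K).le_topologicalClosure ⟨Polynomial.X, trivial, rfl⟩⟩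
  obtain ⟨δ, hδ0, hδ1, hδ2⟩ : ∃ δ : ℝ, 0 < δ ∧ δ ≤ 1 / 2 ∧ 2 * δ ≤ ε / 2 :=
    ⟨min (1 / 2) (ε / 4), by positivity, min_le_left _ _, by
      have := min_le_right (1 / 2) (ε / 4)
      linarith⟩
  have hq1 := tendsto_pow_atTop_nhds_zero_of_lt_one (r := r / ρ) (by positivity)
    ((div_lt_one hρ).2 hrρ)
  have hq2 := tendsto_pow_atTop_nhds_zero_of_lt_one (r := ρ / R)
    (div_nonneg hρ.le (by linarith)) ((div_lt_one (by linarith)).2 hρR)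
  obtain ⟨n, hn0, hn1, hn2⟩ := ((eventually_gt_atTop 0).and ((hq1.eventually_lt_const hδ0).and
    (hq2.eventually_lt_const hδ0))).exists
  -- By the spectral mapping theorem it suffices that the circle avoids the spectrum of `x`.
  have hunit : ((ρ : ℂ) ^ n) ∉ spectrum ℂ (x ^ n) := by
    rw [spectrum.map_pow_of_pos x hn0]
    rintro ⟨w, hw, hwn⟩
    refine notMem_spectrum_closure_polynomials hΓ hub hd x rfl (hs ?_) hw
    have h := congrArg norm hwn
    simp only [norm_pow, Complex.norm_real, Real.norm_eq_abs, abs_of_pos hρ] at h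
    simpa using (pow_left_inj₀ (norm_nonneg w) hρ.le hn0.ne').1 h
  rw [spectrum.notMem_iff] at hunit
  obtain ⟨u, hu⟩ := hunit.exists_right_inv
  have huz : ∀ z : K, ((ρ : ℂ) ^ n - (z : ℂ) ^ n) * (u : C(K, ℂ)) z = 1 := by
    intro z
    have h := congrArg (fun s : S => (s : C(K, ℂ)) z) hu
    simpa [x, Algebra.algebraMap_eq_smul_one] using h
  have hmem : ((ρ : ℂ) ^ n • (u : C(K, ℂ))) ∈ closure (polynomialFunctions K : Set C(K, ℂ)) :=
    S.smul_mem u.2 _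
  obtain ⟨g, ⟨Q, -, rfl⟩, hg⟩ := Metric.mem_closure_iff.1 hmem (ε / 2) (by positivity)
  have hclose : ∀ z : K, ‖Q.eval (z : ℂ) - (ρ : ℂ) ^ n * (u : C(K, ℂ)) z‖ ≤ ε / 2 := by
    intro z
    have h := (ContinuousMap.dist_apply_le_dist z).trans hg.le
    rw [dist_comm, dist_eq_norm] at h
    simpa using h
  refine ⟨Q, fun z hz hzr => ?_, fun z hz hzR => ?_⟩
  · have h1 := hclose ⟨z, hz⟩
    have h2 := huz ⟨z, hz⟩
    have hv : ‖(z / ρ) ^ n‖ ≤ δ := by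
      rw [norm_pow, norm_div, Complex.norm_real, Real.norm_eq_abs, abs_of_pos hρ]
      exact (pow_le_pow_left₀ (by positivity) (by gcongr) n).trans hn1.le
    have h3 := norm_geom_le hδ1 hv
    have hne : (ρ : ℂ) ^ n - z ^ n ≠ 0 := left_ne_zero_of_mul_eq_one h2
    have hid : (z / ρ) ^ n / (1 - (z / ρ) ^ n) = (ρ : ℂ) ^ n * (u : C(K, ℂ)) ⟨z, hz⟩ - 1 := by
      rw [eq_div_of_mul_eq hne ((mul_comm _ _).trans h2)]
      have : (1 : ℂ) - z ^ n / ρ ^ n ≠ 0 := by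
        rw [← div_self (pow_ne_zero n hρc), ← sub_div]
        exact div_ne_zero hne (pow_ne_zero n hρc)
      rw [div_pow]
      field_simp
      ring
    rw [hid] at h3
    calc _ = ‖(Q.eval z - (ρ : ℂ) ^ n * (u : C(K, ℂ)) ⟨z, hz⟩) +
          ((ρ : ℂ) ^ n * (u : C(K, ℂ)) ⟨z, hz⟩ - 1)‖ := by ring_nf
      _ ≤ _ := norm_add_le _ _
      _ ≤ ε := by linarith
  · have h1 := hclose ⟨z, hz⟩
    have h2 := huz ⟨z, hz⟩
    have hz0 : z ≠ 0 := norm_pos_iff.1 (by linarith)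
    have hv : ‖(ρ / z) ^ n‖ ≤ δ := by
      rw [norm_pow, norm_div, Complex.norm_real, Real.norm_eq_abs, abs_of_pos hρ]
      have : 0 < R := by linarith
      exact (pow_le_pow_left₀ (by positivity) (by gcongr) n).trans hn2.le
    have h3 := norm_geom_le hδ1 hv
    have hne : (ρ : ℂ) ^ n - z ^ n ≠ 0 := left_ne_zero_of_mul_eq_one h2
    have hid : (ρ / z) ^ n / (1 - (ρ / z) ^ n) = -((ρ : ℂ) ^ n * (u : C(K, ℂ)) ⟨z, hz⟩) := by
      rw [eq_div_of_mul_eq hne ((mul_comm _ _).trans h2)]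
      have hne' : z ^ n - (ρ : ℂ) ^ n ≠ 0 := by rwa [← neg_sub, neg_ne_zero]
      have : (1 : ℂ) - ρ ^ n / z ^ n ≠ 0 := by
        rw [← div_self (pow_ne_zero n hz0), ← sub_div]
        exact div_ne_zero hne' (pow_ne_zero n hz0)
      rw [div_pow]
      field_simp
      ring
    rw [hid, norm_neg] at h3
    calc _ = ‖(Q.eval z - (ρ : ℂ) ^ n * (u : C(K, ℂ)) ⟨z, hz⟩) +
          (ρ : ℂ) ^ n * (u : C(K, ℂ)) ⟨z, hz⟩‖ := by ring_nf
      _ ≤ _ := norm_add_le _ _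
      _ ≤ ε := by linarith

/-- On the part of `K` inside the circle some polynomial is small, while on the part outside it
nearly cancels `f`: it is `T * (Q - 1)` with `T` near `f` and `Q` near the indicator function of
the disc. -/
lemma exists_polynomial_small_and_cancel {K Γ : Set ℂ} (hK : IsCompact K)
    (hΓ : IsPreconnected Γ) (hub : ¬ Bornology.IsBounded Γ) (hd : Disjoint Γ K)
    {r ρ R : ℝ} (hr : 0 ≤ r) (hrρ : r < ρ) (hρR : ρ < R) (hs : Metric.sphere (0 : ℂ) ρ ⊆ Γ)
    {f : ℂ → ℂ} (hf : Differentiable ℂ f) {ε : ℝ} (hε : 0 < ε) :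
    ∃ P : Polynomial ℂ, (∀ z ∈ K, ‖z‖ ≤ r → ‖P.eval z‖ ≤ ε) ∧
      (∀ z ∈ K, R ≤ ‖z‖ → ‖P.eval z + f z‖ ≤ ε) := by
  obtain ⟨M₀, hM₀⟩ := hK.exists_bound_of_continuousOn hf.continuous.continuousOn
  set M := max M₀ 0
  have hM0 : 0 ≤ M := le_max_right _ _
  obtain ⟨T, hT⟩ := exists_polynomial_near_entire hf hK (ε := min 1 (ε / 2)) (by positivity)
  have hTM : ∀ z ∈ K, ‖T.eval z‖ ≤ M + 1 := by
    intro z hz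
    have h1 := (hT z hz).le.trans (min_le_left _ _)
    have h2 := (hM₀ z hz).trans (le_max_left M₀ 0)
    have h3 := norm_sub_norm_le (T.eval z) (f z)
    rw [norm_sub_rev] at h3
    change ‖f z‖ ≤ M at h2
    linarith
  obtain ⟨Q, hQ1, hQ2⟩ := exists_polynomial_near_indicator hK hΓ hub hd hr hrρ hρR hs
    (ε := ε / 2 / (M + 1)) (by positivity)
  have hmul : ∀ z ∈ K, ∀ y : ℂ, ‖y‖ ≤ ε / 2 / (M + 1) → ‖T.eval z * y‖ ≤ ε / 2 := by
    intro z hz y hy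
    rw [norm_mul]
    calc _ ≤ (M + 1) * (ε / 2 / (M + 1)) := by gcongr; exact hTM z hz
      _ = ε / 2 := by field_simp
  refine ⟨T * (Q - 1), fun z hz h => ?_, fun z hz h => ?_⟩
  · have := hmul z hz _ (hQ1 z hz h)
    simp only [Polynomial.eval_mul, Polynomial.eval_sub, Polynomial.eval_one]
    linarith
  · have h1 := hmul z hz _ (hQ2 z hz h)
    have h2 := (hT z hz).le.trans (min_le_right _ _)
    simp only [Polynomial.eval_mul, Polynomial.eval_sub, Polynomial.eval_one]
    calc _ = ‖T.eval z * Q.eval z + (f z - T.eval z)‖ := by ring_nf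
      _ ≤ _ := norm_add_le _ _
      _ ≤ ε := by linarith

/-! ### Geometry of the translated discs -/

/-- A unit vector outside the open arc of half-angle `θ` around `1` has real part at most
`cos θ`. -/
lemma OutsideArc.re_le_cos {θ : ℝ} (h0 : 0 < θ) {a : ℂ} (ha : ‖a‖ = 1)
    (h : OutsideArc θ a) : a.re ≤ Real.cos θ := by
  have hexp : a = Complex.exp (a.arg * Complex.I) := by
    have := Complex.norm_mul_exp_arg_mul_I a
    rw [ha] at this
    simpa using this.symm
  have habs : θ ≤ |a.arg| := by
    by_contra! hlt
    exact h a.arg (abs_lt.1 hlt).1 (abs_lt.1 hlt).2 hexp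
  have hre : a.re = Real.cos |a.arg| := by
    rw [Real.cos_abs, Complex.cos_arg (norm_pos_iff.1 (by rw [ha]; norm_num)), ha, div_one]
  rw [hre]
  exact Real.cos_le_cos_of_nonneg_of_le_pi h0.le (Complex.abs_arg_le_pi a) habs

/-- A multiple `k • a` of a unit vector with real part at most `cos θ` has distance at least
`k * sin θ` from the positive real axis. -/
lemma mul_sin_le_norm_sub {θ : ℝ} (h0 : 0 < θ) (hπ : θ < Real.pi) {a : ℂ} (ha : ‖a‖ = 1)
    (hre : a.re ≤ Real.cos θ) {k s : ℝ} (hk : 0 ≤ k) (hs : 0 ≤ s) :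
    k * Real.sin θ ≤ ‖(s : ℂ) - k * a‖ := by
  have hsin := Real.sin_pos_of_pos_of_lt_pi h0 hπ
  refine le_of_sq_le_sq ?_ (norm_nonneg _)
  have hn : a.re ^ 2 + a.im ^ 2 = 1 := by
    have := Complex.sq_norm a
    rw [ha, Complex.normSq_apply] at this
    linarith
  rw [Complex.sq_norm, Complex.normSq_apply]
  simp only [Complex.sub_re, Complex.sub_im, Complex.mul_re, Complex.mul_im, Complex.ofReal_re,
    Complex.ofReal_im]
  have h1 := Real.sin_sq_add_cos_sq θ
  have h2 : s * k * a.re ≤ s * k * Real.cos θ := by gcongr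
  have h3 : (s - 0 - (k * a.re - 0 * a.im)) = s - k * a.re := by ring
  nlinarith [sq_nonneg (s - k * Real.cos θ), mul_self_nonneg k]

/-- A keyhole: the circle of radius `ρ`, the real segment `[ρ, X]`, and the vertical line through
`X`. -/
def keyhole (ρ X : ℝ) : Set ℂ :=
  (Metric.sphere 0 ρ ∪ (fun s : ℝ => (s : ℂ)) '' Set.Icc ρ X) ∪
    (fun y : ℝ => (X : ℂ) + y * Complex.I) '' Set.univ

lemma isPreconnected_keyhole {ρ X : ℝ} (hρ : 0 ≤ ρ) (hX : ρ ≤ X) :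
    IsPreconnected (keyhole ρ X) := by
  refine IsPreconnected.union (X : ℂ) (Or.inr ⟨X, ⟨hX, le_rfl⟩, rfl⟩) ⟨0, trivial, by simp⟩
    (IsPreconnected.union (ρ : ℂ) ?_ ⟨ρ, ⟨le_rfl, hX⟩, rfl⟩ ?_ ?_) ?_
  · simp [abs_of_nonneg hρ]
  · exact isPreconnected_sphere (by simp) 0 ρ
  · exact isPreconnected_Icc.image _ (by fun_prop)
  · exact isPreconnected_univ.image _ (by fun_prop)

lemma not_isBounded_keyhole (ρ X : ℝ) : ¬ Bornology.IsBounded (keyhole ρ X) := by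
  intro h
  obtain ⟨C, hC⟩ := h.exists_norm_le
  have h1 := hC ((X : ℂ) + ((|C| + 1 : ℝ) : ℂ) * Complex.I) (Or.inr ⟨|C| + 1, trivial, rfl⟩)
  have h2 := Complex.abs_im_le_norm ((X : ℂ) + ((|C| + 1 : ℝ) : ℂ) * Complex.I)
  simp only [Complex.add_im, Complex.mul_im, Complex.ofReal_re, Complex.ofReal_im, Complex.I_im,
    Complex.I_re] at h2
  have h3 := le_abs_self (0 + ((|C| + 1) * 1 + 0 * 0))
  have h4 := le_abs_self C
  linarith

/-- The points `z + k * a` with `|z| ≤ j`, `a` a unit vector of real part at most `c`, and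
`k ∈ [M, M']`. -/
def sector (j : ℝ) (c : ℝ) (M M' : ℕ) : Set ℂ :=
  ⋃ k ∈ Set.Icc M M', (fun p : ℂ × ℂ => p.1 + (k : ℂ) * p.2) ''
    (Metric.closedBall 0 j ×ˢ (Metric.sphere 0 1 ∩ {a : ℂ | a.re ≤ c}))

lemma isCompact_sector (j c : ℝ) (M M' : ℕ) : IsCompact (sector j c M M') := by
  refine (Set.finite_Icc M M').isCompact_biUnion fun k _ => IsCompact.image ?_ (by fun_prop)
  exact (isCompact_closedBall 0 j).prod
    ((isCompact_sphere 0 1).inter_right (isClosed_le Complex.continuous_re continuous_const))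

/-- The union of the discs of radius `j` centred at the integers of `[N, N']`. -/
def discs (j : ℝ) (N N' : ℕ) : Set ℂ :=
  ⋃ k ∈ Set.Icc N N', Metric.closedBall (k : ℂ) j

lemma isCompact_discs (j : ℝ) (N N' : ℕ) : IsCompact (discs j N N') :=
  (Set.finite_Icc N N').isCompact_biUnion fun k _ => isCompact_closedBall (k : ℂ) j

lemma norm_ge_of_mem_sector {j c : ℝ} {M M' : ℕ} {w : ℂ} (hw : w ∈ sector j c M M') :
    (M : ℝ) - j ≤ ‖w‖ ∧ ‖w‖ ≤ M' + j := by
  simp only [sector, Set.mem_iUnion] at hw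
  obtain ⟨k, ⟨hk1, hk2⟩, ⟨z, a⟩, ⟨hz, ha, -⟩, rfl⟩ := hw
  simp only [mem_closedBall_zero_iff, mem_sphere_zero_iff_norm] at hz ha
  have hka : ‖(k : ℂ) * a‖ = k := by rw [norm_mul, ha, mul_one, Complex.norm_natCast]
  have h1 : (M : ℝ) ≤ k := by exact_mod_cast hk1
  have h2 : (k : ℝ) ≤ M' := by exact_mod_cast hk2
  have h3 := norm_add_le z ((k : ℂ) * a)
  have h4 := norm_sub_le (z + (k : ℂ) * a) z
  rw [add_sub_cancel_left] at h4
  simp only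
  constructor <;> linarith

lemma re_ge_of_mem_discs {j : ℝ} {N N' : ℕ} {w : ℂ} (hw : w ∈ discs j N N') :
    (N : ℝ) - j ≤ w.re := by
  simp only [discs, Set.mem_iUnion] at hw
  obtain ⟨k, ⟨hk1, -⟩, hw⟩ := hw
  rw [Metric.mem_closedBall, dist_eq_norm] at hw
  have h1 : (N : ℝ) ≤ k := by exact_mod_cast hk1
  have h2 := Complex.abs_re_le_norm (w - k)
  have h3 := neg_abs_le (w - k).re
  simp only [Complex.sub_re, Complex.natCast_re] at h2 h3
  linarith

/-- The keyhole separates the central disc from the sector and from the discs far to the right: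
its circle runs around the central disc, its segment through the gap of the sector, and its line
between the sector and the discs. -/
lemma disjoint_keyhole {θ : ℝ} (h0 : 0 < θ) (hπ : θ < Real.pi) {j X : ℝ} (hj : 0 ≤ j)
    {M M' N N' : ℕ} (hMj : 2 * j + 1 < M) (hMs : j < M * Real.sin θ) (hX : M' + j < X)
    (hXj : j + 1 ≤ X) (hN : X < N - j) :
    Disjoint (keyhole (j + 1) X)
      (Metric.closedBall 0 j ∪ sector j (Real.cos θ) M M' ∪ discs j N N') := by
  rw [Set.disjoint_left]
  rintro w hw ((hB | hA) | hC)
  · rw [mem_closedBall_zero_iff] at hB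
    rcases hw with (hw | ⟨s, hs, rfl⟩) | ⟨y, -, rfl⟩
    · rw [mem_sphere_zero_iff_norm] at hw
      linarith
    · have := (Complex.re_le_norm (s : ℂ)).trans hB
      rw [Complex.ofReal_re] at this
      linarith [hs.1]
    · have := (Complex.re_le_norm _).trans hB
      simp at this
      linarith
  · have hA' := norm_ge_of_mem_sector hA
    rcases hw with (hw | ⟨s, hs, rfl⟩) | ⟨y, -, rfl⟩
    · rw [mem_sphere_zero_iff_norm] at hw
      linarith
    · simp only [sector, Set.mem_iUnion] at hA
      obtain ⟨k, ⟨hk1, -⟩, ⟨z, a⟩, ⟨hz, ha, hre⟩, hsz⟩ := hA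
      simp only [mem_closedBall_zero_iff, mem_sphere_zero_iff_norm, Set.mem_ofPred_eq]
        at hz ha hre hsz
      have h1 := mul_sin_le_norm_sub h0 hπ ha hre (k := k) (s := s) (by positivity)
        (by linarith [hs.1])
      rw [Complex.ofReal_natCast, ← hsz, add_sub_cancel_right] at h1
      have h2 : (M : ℝ) * Real.sin θ ≤ k * Real.sin θ := by
        have := (Real.sin_pos_of_pos_of_lt_pi h0 hπ).le
        gcongr
      linarith
    · have := (Complex.re_le_norm _).trans hA'.2
      simp at this
      linarith
  · have hC' := re_ge_of_mem_discs hC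
    rcases hw with (hw | ⟨s, hs, rfl⟩) | ⟨y, -, rfl⟩
    · rw [mem_sphere_zero_iff_norm] at hw
      have := Complex.re_le_norm w
      linarith
    · rw [Complex.ofReal_re] at hC'
      linarith [hs.2]
    · simp at hC'
      linarith

/-- Lemma 3.3: for every `θ ∈ (0,π)`, `j ≥ 1` and `K ≥ 0`, there exist `k₁, k₂ ≥ K`
such that for every `ε > 0`, `b > 0` and entire `f` there is a polynomial `P` with
`p_j(P) < ε`, `p_j(e^{bk} T_a^k (P+f)) < ε` for all `a` in the unit circle outside the
arc `{e^{iα} : |α| < θ}` and all `k ∈ [m_{k₁}, m_{k₁} + φ(m_{k₁})]`, and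
`p_j(e^{bk} T_1^k (P+f)) < ε` for all `k ∈ [t_{k₂}, t_{k₂} + φ(t_{k₂})]`. -/
theorem stmt_6 (φ : ℕ → ℕ) (m t : ℕ → ℕ)
    (hm : StrictMono m) (hmpos : ∀ k, 1 ≤ k → 1 ≤ m k)
    (ht : StrictMono t) (htpos : ∀ k, 1 ≤ k → 1 ≤ t k) :
    ∀ θ : ℝ, 0 < θ → θ < Real.pi → ∀ j : ℕ, 1 ≤ j → ∀ K : ℕ,
      ∃ k₁ k₂ : ℕ, K ≤ k₁ ∧ K ≤ k₂ ∧
        ∀ ε : ℝ, 0 < ε → ∀ b : ℝ, 0 < b → ∀ f : ℂ → ℂ, Differentiable ℂ f →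
          ∃ P : Polynomial ℂ,
            pnorm j (fun z => P.eval z) < ε ∧
            (∀ a : ℂ, ‖a‖ = 1 → OutsideArc θ a →
              ∀ k : ℕ, m k₁ ≤ k → k ≤ m k₁ + φ (m k₁) →
                pnorm j (fun z => (Real.exp (b * k) : ℂ) *
                  (P.eval (z + (k : ℂ) * a) + f (z + (k : ℂ) * a))) < ε) ∧
            (∀ k : ℕ, t k₂ ≤ k → k ≤ t k₂ + φ (t k₂) →
              pnorm j (fun z => (Real.exp (b * k) : ℂ) *
                (P.eval (z + (k : ℂ)) + f (z + (k : ℂ)))) < ε) := by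
  intro θ h0 hπ j hj K
  have hsin := Real.sin_pos_of_pos_of_lt_pi h0 hπ
  obtain ⟨n, hn⟩ := exists_nat_gt (j / Real.sin θ)
  -- `k₁` makes the sector clear both the disc `|z| ≤ j + 1` and the positive real axis.
  set k₁ := max K (max n (2 * j + 2)) with hk₁
  set M := m k₁ with hM
  set M' := M + φ M with hM'
  have hMk : k₁ ≤ m k₁ := hm.id_le k₁
  -- `k₂` pushes the last discs beyond the vertical line through `M' + j + 1`.
  set k₂ := max K (M' + 2 * j + 2) with hk₂
  have hNk : k₂ ≤ t k₂ := ht.id_le k₂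
  set N := t k₂ with hN
  set N' := N + φ N with hN'
  have hn' : n ≤ M := by omega
  have hMj : 2 * j + 2 ≤ M := by omega
  have hNj : M' + 2 * j + 2 ≤ N := by omega
  have hMM' : M ≤ M' := by omega
  have hnR : (n : ℝ) ≤ M := by exact_mod_cast hn'
  have hMjR : 2 * (j : ℝ) + 2 ≤ M := by exact_mod_cast hMj
  have hNjR : (M' : ℝ) + 2 * j + 2 ≤ N := by exact_mod_cast hNj
  have hMMR : (M : ℝ) ≤ M' := by exact_mod_cast hMM'
  have hj0 : (0 : ℝ) ≤ j := Nat.cast_nonneg j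
  have hMs : (j : ℝ) < M * Real.sin θ := (div_lt_iff₀ hsin).1 (hn.trans_le hnR)
  have hd := disjoint_keyhole h0 hπ (j := j) (X := M' + j + 1) hj0 (M := M) (M' := M') (N := N)
    (N' := N') (by linarith) hMs (by linarith) (by linarith) (by linarith)
  have hKc : IsCompact (Metric.closedBall 0 (j : ℝ) ∪ sector j (Real.cos θ) M M' ∪
      discs j N N') :=
    ((isCompact_closedBall 0 _).union (isCompact_sector _ _ _ _)).union (isCompact_discs _ _ _)
  refine ⟨k₁, k₂, le_max_left _ _, le_max_left _ _, fun ε hε b hb f hf => ?_⟩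
  obtain ⟨P, hP1, hP2⟩ := exists_polynomial_small_and_cancel hKc
    (isPreconnected_keyhole (by linarith) (by linarith)) (not_isBounded_keyhole _ _) hd
    (r := j) (ρ := j + 1) (R := M - j) hj0 (by linarith) (by linarith)
    (fun _ h => Or.inl (Or.inl h)) hf (ε := ε / 2 / Real.exp (b * (M' + N' : ℕ)))
    (by positivity)
  have hscale : ∀ (k : ℕ) (y : ℂ), k ≤ M' + N' →
      ‖y‖ ≤ ε / 2 / Real.exp (b * (M' + N' : ℕ)) → ‖(Real.exp (b * k) : ℂ) * y‖ ≤ ε / 2 := by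
    intro k y hk hy
    rw [norm_mul, Complex.norm_real, Real.norm_eq_abs, abs_of_pos (Real.exp_pos _)]
    calc _ ≤ Real.exp (b * (M' + N' : ℕ)) * (ε / 2 / Real.exp (b * (M' + N' : ℕ))) := by
          gcongr
      _ = ε / 2 := by field_simp
  refine ⟨P, ?_, fun a ha hout k hk1 hk2 => ?_, fun k hk1 hk2 => ?_⟩
  · refine (pnorm_le_of_bound (c := ε / 2) j fun z hz => ?_).trans_lt (by linarith)
    refine (hP1 z (Or.inl (Or.inl (by simpa using hz))) hz).trans
      (div_le_self (by positivity) (Real.one_le_exp (by positivity)))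
  · refine (pnorm_le_of_bound (c := ε / 2) j fun z hz => ?_).trans_lt (by linarith)
    have hmem : z + (k : ℂ) * a ∈ sector j (Real.cos θ) M M' := by
      simp only [sector, Set.mem_iUnion]
      exact ⟨k, ⟨hk1, hk2⟩, (z, a), ⟨by simpa using hz, by simpa using ha,
        hout.re_le_cos h0 ha⟩, rfl⟩
    exact hscale k _ (hk2.trans (Nat.le_add_right M' N')) (hP2 _ (Or.inl (Or.inr hmem)) (norm_ge_of_mem_sector hmem).1)
  · refine (pnorm_le_of_bound (c := ε / 2) j fun z hz => ?_).trans_lt (by linarith)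
    have hmem : z + (k : ℂ) ∈ discs j N N' := by
      simp only [discs, Set.mem_iUnion]
      exact ⟨k, ⟨hk1, hk2⟩, by simpa [dist_eq_norm] using hz⟩
    have hre := re_ge_of_mem_discs hmem
    have hn := Complex.re_le_norm (z + (k : ℂ))
    exact hscale k _ (hk2.trans (Nat.le_add_left N' M')) (hP2 _ (Or.inr hmem) (by linarith))
end
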